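/- Let ⟨σ_n⟩ also denote the monoid congruence on End(X_n^ℤ, σ_n) generated by the pairs (σ_n^i, id) for i ∈ ℤ (so it relates ψ and φ exactly when ψ = σ_n^i ∘ φ for some i ∈ ℤ). Then the quotient monoid End(X_n^ℤ, σ_n)/⟨σ_n⟩ is isomorphic to the transducer monoid SL_n. -/

import Mathlib

/-!
The isomorphism sends an endomorphism `f` of the full shift to the minimal representative of the
transducer of a block code for `f`, which exists by the Curtis–Hedlund–Lyndon theorem.

The proof rests on the relation `Realizes T α f` between a strongly synchronizing transducer `T`
with an annotation `α : T.Q → ℤ` and a map `f` of the full shift. By synchronization every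
bi-infinite input `x` has exactly one run of `T`, and the annotation says where the output belongs:
if the state before reading `x i` is `q`, then the output from then on is `f x` from the coordinate
`i + α q` on. The annotation condition is what makes these prescriptions compatible along the run
(`hmap_run_eq`). An annotation forces SL3, and conversely a core transducer with SL3 has an
annotation (`exists_annotation`), and then realizes an endomorphism (`exists_end`).

The relation is compatible with all the constructions involved: products correspond to
composition and add the annotations (`realizes_prod`), passing to the core restricts the annotation
(`realizes_core`), removing incomplete response at a state `q` adds `|Λ(ε,q)|` to the annotation,
and ω-equivalent states carry the same value. Hence the minimal representative of a core transducer
realizing `f` is an element of `SL_n` realizing `f` (`minRep_spec`).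

It remains to see that elements `T`, `U` of `SL_n` realizing `f`, `g` are ω-equal exactly when `f`
and `g` differ by a power of the shift. An ω-equality preserves transitions and outputs, so it
preserves annotations up to a constant, which is the power of the shift (`shift_of_omegaEq`). For
the converse, the absence of incomplete response makes `β q` the first coordinate of `g x` that the
past of `x` does not determine; so the annotations along the runs of `T` and `U` on `x` differ by
the power of the shift (`ann_le_of_shift`), and at each time the two states induce the same map
(`omegaEq_of_shift`).

In the degenerate case, some state has a single output sequence. Then `f` is constant, and there is
one letter `c` such that every state outputs `c c c …` (`hmap_const`): the state fixed by the
letter `0` outputs a sequence of period one, and every state can be reached from every other.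
-/

/-!
Common definitions: transducers over a finite alphabet, strong synchronization,
cores, ω-equivalence, minimal representatives, the monoids `M_n`, `SL_n`, `SO_n`,
the groups `O_n`, `L_n`, annotations, and the two-sided full shift.

Throughout, the alphabet is `Fin (n + 2)`, i.e. an alphabet of size `n + 2 ≥ 2`.
-/

namespace ShiftPaper

/-- The alphabet with `n + 2` letters. -/
abbrev A (n : ℕ) : Type := Fin (n + 2)

/-- Finite words over the alphabet. -/
abbrev Word (n : ℕ) : Type := List (A n)

/-- A transducer over the alphabet `A n`: a finite nonempty set of states together with a
transition function `tr` and an output function `out` (possibly asynchronous). -/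
structure Transducer (n : ℕ) where
  Q : Type
  fin : Finite Q
  ne : Nonempty Q
  tr : A n → Q → Q
  out : A n → Q → Word n

variable {n : ℕ}

instance (T : Transducer n) : Finite T.Q := T.fin
instance (T : Transducer n) : Nonempty T.Q := T.ne

/-- Extended transition function, reading a finite word from left to right. -/
def dsts (T : Transducer n) : Word n → T.Q → T.Q
  | [], q => q
  | a :: w, q => dsts T w (T.tr a q)

/-- Extended output function along a finite word. -/
def outs (T : Transducer n) : Word n → T.Q → Word n
  | [], _ => []
  | a :: w, q => T.out a q ++ outs T w (T.tr a q)

/-- Every (nonempty) circuit in the transducer has nonempty output. -/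
def CircuitsNonempty (T : Transducer n) : Prop :=
  ∀ (q : T.Q) (w : Word n), w ≠ [] → dsts T w q = q → outs T w q ≠ []

/-- `T` is synchronizing at level `k`: the state reached after reading any word of
length `k` does not depend on the starting state. -/
def SyncAt (T : Transducer n) (k : ℕ) : Prop :=
  ∀ w : Word n, w.length = k → ∀ p q : T.Q, dsts T w p = dsts T w q

/-- `T` is strongly synchronizing: synchronizing at some level. -/
def StronglySync (T : Transducer n) : Prop := ∃ k, SyncAt T k

/-- The minimal synchronizing level (junk value `0` if `T` is not strongly synchronizing). -/
noncomputable def syncLevel (T : Transducer n) : ℕ := by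
  classical
  exact if h : StronglySync T then Nat.find h else 0

/-- The infinite output stream produced from state `q` on reading the infinite input `x`
(the map `h_q`).  (Well defined on transducers all of whose circuits have nonempty
output; junk values otherwise.) -/
noncomputable def hmap (T : Transducer n) (q : T.Q) (x : ℕ → A n) : ℕ → A n := fun m => by
  classical
  exact if h : ∃ k, m < (outs T ((List.range k).map x) q).length then
    (outs T ((List.range h.choose).map x) q).getD m default
  else default

/-- ω-equality of transducers: a bijection of the state sets under which corresponding
states induce the same maps on infinite sequences. -/
def OmegaEq (T U : Transducer n) : Prop :=
  ∃ f : T.Q ≃ U.Q, ∀ q, hmap T q = hmap U (f q)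

/-- The setoid on states given by ω-equivalence of states. -/
def omegaSetoid (T : Transducer n) : Setoid T.Q :=
  ⟨fun p q => hmap T p = hmap T q, ⟨fun _ => rfl, fun h => h.symm, fun h h' => h.trans h'⟩⟩

/-- The transducer obtained by identifying ω-equivalent states. -/
noncomputable def quotT (T : Transducer n) : Transducer n where
  Q := Quotient (omegaSetoid T)
  fin := Finite.of_surjective (Quotient.mk (omegaSetoid T))
    fun c => ⟨Quotient.out c, Quotient.out_eq c⟩
  ne := ⟨Quotient.mk (omegaSetoid T) (Classical.choice T.ne)⟩
  tr := fun a c => Quotient.mk (omegaSetoid T) (T.tr a (Quotient.out c))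
  out := fun a c => T.out a (Quotient.out c)

/-- `q` is a state of the core of `T`: it is forced by some word whose length is a
synchronizing level of `T`. -/
def CoreState (T : Transducer n) (q : T.Q) : Prop :=
  ∃ (k : ℕ) (w : Word n), SyncAt T k ∧ w.length = k ∧ ∀ p, dsts T w p = q

/-- `T` is core: it equals its core. -/
def IsCore (T : Transducer n) : Prop := ∀ q : T.Q, CoreState T q

/-- Auxiliary predicate used to make the core construction total. -/
def CoreStateE (T : Transducer n) (q : T.Q) : Prop :=
  CoreState T q ∨ ∀ p, ¬ CoreState T p

/-- The core of `T` (as a transducer). -/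
noncomputable def coreT (T : Transducer n) : Transducer n where
  Q := {q : T.Q // CoreStateE T q}
  fin := Subtype.finite
  ne := by
    classical
    by_cases h : ∀ p, ¬ CoreState T p
    · exact ⟨⟨Classical.choice T.ne, Or.inr h⟩⟩
    · push_neg at h
      obtain ⟨p, hp⟩ := h
      exact ⟨⟨p, Or.inl hp⟩⟩
  tr := fun a q => by
    classical
    exact if h : CoreStateE T (T.tr a q.1) then ⟨T.tr a q.1, h⟩ else q
  out := fun a q => T.out a q.1

/-- There exist two inputs whose outputs from `q` disagree at position `j`. -/
def Disagree (T : Transducer n) (q : T.Q) (j : ℕ) : Prop :=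
  ∃ x y : ℕ → A n, hmap T q x j ≠ hmap T q y j

/-- The extent of incomplete response of `q` (the length of `Λ(ε,q)`) is finite. -/
def FiniteExtent (T : Transducer n) (q : T.Q) : Prop := ∃ j, Disagree T q j

/-- The extent of incomplete response `|Λ(ε,q)|` of the state `q`
(junk value `0` when it is infinite). -/
noncomputable def extentLen (T : Transducer n) (q : T.Q) : ℕ := by
  classical
  exact if h : FiniteExtent T q then Nat.find h else 0

/-- The word `Λ(ε,q)`: the greatest common prefix of all outputs from `q`. -/
noncomputable def extentWord (T : Transducer n) (q : T.Q) : Word n :=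
  (List.range (extentLen T q)).map (hmap T q fun _ => default)

/-- `T` has no states of incomplete response (`Λ(ε,q) = ε` for every state `q`). -/
def NoIncomplete (T : Transducer n) : Prop := ∀ q : T.Q, Disagree T q 0

/-- No two distinct states of `T` are ω-equivalent. -/
def WeaklyMinimal (T : Transducer n) : Prop :=
  ∀ p q : T.Q, hmap T p = hmap T q → p = q

/-- The Lipschitz condition (SL3): around any circuit the output is as long as the input. -/
def SL3 (T : Transducer n) : Prop :=
  ∀ (q : T.Q) (Γ : Word n), dsts T Γ q = q → (outs T Γ q).length = Γ.length

/-- `T` is synchronous: it writes exactly one letter for each letter read. -/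
def Synchronous (T : Transducer n) : Prop :=
  ∀ (a : A n) (q : T.Q), (T.out a q).length = 1

/-- Boolean lexicographic comparison of words. -/
def lexLtB : Word n → Word n → Bool
  | [], [] => false
  | [], _ :: _ => true
  | _ :: _, [] => false
  | a :: u, b :: v => if a < b then true else if b < a then false else lexLtB u v

/-- The lexicographically least rotation of a word. -/
def minimalRot (w : Word n) : Word n :=
  ((List.range w.length).map fun i => w.rotate i).foldl
    (fun acc r => if lexLtB r acc then r else acc) w

/-- A nonempty word is prime if it is not a power of a strictly shorter word. -/
def IsPrime (w : Word n) : Prop :=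
  w ≠ [] ∧ ∀ (u : Word n) (k : ℕ), w = (List.replicate k u).flatten → w.length ≤ u.length

/-- `v` is a rotation of `u`. -/
def RotEq (u v : Word n) : Prop := ∃ i : ℕ, v = u.rotate i

/-- The prime word of which the (eventually constant single) image point of `T` is a power
(used for the degenerate transducers `Z_x`; junk values otherwise). -/
noncomputable def periodicRoot (T : Transducer n) : Word n := by
  classical
  exact
    if hp : ∃ m, 0 < m ∧ ∀ j, hmap T (Classical.choice T.ne) (fun _ => default) (j + m) =
        hmap T (Classical.choice T.ne) (fun _ => default) j
    then (List.range (Nat.find hp)).map (hmap T (Classical.choice T.ne) fun _ => default)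
    else [default]

/-- Remove the incomplete response from the states of `T`: replace the output `λ(a,q)` by
`Λ(a,q) - Λ(ε,q)`.  (In the degenerate case where the extents of incomplete response are
infinite, all outputs are replaced by the minimal rotation of the prime root of the unique
image point, so that minimising produces the transducer `Z_x` of the paper.) -/
noncomputable def removeIncomplete (T : Transducer n) : Transducer n where
  Q := T.Q
  fin := T.fin
  ne := T.ne
  tr := T.tr
  out := fun a q => by
    classical
    exact if ∀ p : T.Q, FiniteExtent T p then
      (T.out a q ++ extentWord T (T.tr a q)).drop (extentLen T q)
    else minimalRot (periodicRoot T)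

/-- The minimal representative `[T]` of a strongly synchronizing core transducer `T`:
remove incomplete response, take the core, and identify ω-equivalent states. -/
noncomputable def minRep (T : Transducer n) : Transducer n :=
  quotT (coreT (removeIncomplete T))

/-- The single state transducer `Z_x` which outputs `x` on every input letter. -/
def Zword (x : Word n) : Transducer n where
  Q := PUnit
  fin := inferInstance
  ne := ⟨PUnit.unit⟩
  tr := fun _ q => q
  out := fun _ _ => x

/-- The single state identity transducer. -/
def oneT : Transducer n where
  Q := PUnit
  fin := inferInstance
  ne := ⟨PUnit.unit⟩
  tr := fun _ q => q
  out := fun a _ => [a]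

/-- The product transducer `T * U`: the outputs of `T` are processed by `U`. -/
noncomputable def prodT (T U : Transducer n) : Transducer n where
  Q := T.Q × U.Q
  fin := inferInstance
  ne := ⟨⟨Classical.choice T.ne, Classical.choice U.ne⟩⟩
  tr := fun a p => (T.tr a p.1, dsts U (T.out a p.1) p.2)
  out := fun a p => outs U (T.out a p.1) p.2

/-- The product in `M_n`: the minimal representative of the core of `T * U`. -/
noncomputable def mulT (T U : Transducer n) : Transducer n :=
  minRep (coreT (prodT T U))

/-- Membership in the monoid `M_n` of minimal, strongly synchronizing, core transducers
(a transducer is minimal if it is core, has no states of incomplete response and no two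
distinct ω-equivalent states, or it is one of the degenerate transducers `Z_x` for a prime
word `x` which is least in its rotation class). -/
def MnMem (T : Transducer n) : Prop :=
  CircuitsNonempty T ∧ StronglySync T ∧ IsCore T ∧
    ((NoIncomplete T ∧ WeaklyMinimal T) ∨
      ∃ x : Word n, IsPrime x ∧ minimalRot x = x ∧ OmegaEq T (Zword x))

/-- Membership in the monoid `SL_n`: elements of `M_n` satisfying the Lipschitz condition. -/
def SLnMem (T : Transducer n) : Prop := MnMem T ∧ SL3 T

/-- Membership in the monoid `SO_n`: elements of `M_n` all of whose states induce injective
maps with clopen image. -/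
def SOnMem (T : Transducer n) : Prop :=
  MnMem T ∧ ∀ q : T.Q, Function.Injective (hmap T q) ∧ IsClopen (Set.range (hmap T q))

/-- Membership in the group `O_n`: invertible elements of `SO_n` (with inverse in `SO_n`);
equality in `M_n` is ω-equality. -/
def OnMem (T : Transducer n) : Prop :=
  SOnMem T ∧ ∃ U : Transducer n, SOnMem U ∧ OmegaEq (mulT T U) oneT ∧ OmegaEq (mulT U T) oneT

/-- Membership in the group `L_n = O_n ∩ SL_n`. -/
def LnMem (T : Transducer n) : Prop := OnMem T ∧ SL3 T

/-- Membership in the monoid `\widetilde{P}_n` of weakly minimal, synchronous, strongly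
synchronizing core transducers. -/
def PtildeMem (T : Transducer n) : Prop :=
  CircuitsNonempty T ∧ StronglySync T ∧ IsCore T ∧ Synchronous T ∧ WeaklyMinimal T

/-- The product in `\widetilde{P}_n`: take the product transducer, identify ω-equivalent
states and take the core. -/
noncomputable def ptildeMul (P R : Transducer n) : Transducer n :=
  coreT (quotT (prodT P R))

/-- An annotation of (a strongly synchronizing core transducer satisfying the Lipschitz
condition) `T`. -/
def Annotation (T : Transducer n) (α : T.Q → ℤ) : Prop :=
  ∀ (q : T.Q) (Γ : Word n),
    α (dsts T Γ q) = α q + ((outs T Γ q).length : ℤ) - (Γ.length : ℤ)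

/-! ### The two-sided full shift -/

/-- The space of bi-infinite sequences over the alphabet `A n`. -/
abbrev FullShift (n : ℕ) : Type := ℤ → A n

/-- The `i`-th power of the shift map: `(shiftZ i x) j = x (j - i)`.
The shift `σ` itself is `shiftZ 1`. -/
def shiftZ (i : ℤ) (x : FullShift n) : FullShift n := fun j => x (j - i)

/-- The monoid of endomorphisms of the shift dynamical system: continuous maps on the
space of bi-infinite sequences commuting with the shift. -/
def EndShift (n : ℕ) : Type :=
  {f : FullShift n → FullShift n // Continuous f ∧ ∀ x, f (shiftZ 1 x) = shiftZ 1 (f x)}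

/-- The group of automorphisms of the shift dynamical system: homeomorphisms of the
space of bi-infinite sequences commuting with the shift. -/
def AutShift (n : ℕ) : Type :=
  {f : FullShift n → FullShift n // Continuous f ∧ (∀ x, f (shiftZ 1 x) = shiftZ 1 (f x)) ∧
    ∃ g : FullShift n → FullShift n, Continuous g ∧ (∀ x, g (f x) = x) ∧ ∀ x, f (g x) = x}

/-- The window `x_{i-k} … x_{i-1}` of a bi-infinite sequence. -/
def window (x : FullShift n) (i : ℤ) (k : ℕ) : Word n :=
  (List.range k).map fun j => x (i - (k : ℤ) + (j : ℤ))

/-- The state of `L` forced by the window `x_{i-k} … x_{i-1}`. -/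
noncomputable def forced (L : Transducer n) (k : ℕ) (x : FullShift n) (i : ℤ) : L.Q :=
  dsts L (window x i k) (Classical.choice L.ne)

/-- The output word written while processing the letter `x i`. -/
noncomputable def outAt (L : Transducer n) (k : ℕ) (x : FullShift n) (i : ℤ) : Word n :=
  L.out (x i) (forced L k x i)

/-- The defining specification of the map `(L, α) : X_n^ℤ → X_n^ℤ` induced by an annotated
transducer: for each index `i`, with `q` the state forced by `x_{i-k} … x_{i-1}` and
`w = λ(x_i, q)`, the word `w` occupies the coordinates `i + α q, …, i + α q + |w| - 1`
of the image sequence `y`. -/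
def SpecAt (L : Transducer n) (α : L.Q → ℤ) (k : ℕ) (x y : FullShift n) : Prop :=
  ∀ (i : ℤ) (j : ℕ), j < (outAt L k x i).length →
    y (i + α (forced L k x i) + (j : ℤ)) = (outAt L k x i).getD j default

/-- The map `(L, α) : X_n^ℤ → X_n^ℤ` induced by an annotated transducer. -/
noncomputable def inducedMap (L : Transducer n) (α : L.Q → ℤ) (k : ℕ) :
    FullShift n → FullShift n := fun x m => by
  classical
  exact if h : ∃ p : ℤ × ℕ, p.2 < (outAt L k x p.1).length ∧
      p.1 + α (forced L k x p.1) + (p.2 : ℤ) = m then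
    (outAt L k x h.choose.1).getD h.choose.2 default
  else default

/-- The map `κ` from the states of `T` to the states of its minimal representative. -/
noncomputable def kappa (T : Transducer n) (q : T.Q) : (minRep T).Q := by
  classical
  exact Quotient.mk (omegaSetoid (coreT (removeIncomplete T)))
    (if h : CoreStateE (removeIncomplete T) q then
      (⟨q, h⟩ : (coreT (removeIncomplete T)).Q)
    else Classical.choice (coreT (removeIncomplete T)).ne)

/-- The annotation `\overline{α + β}` of the product `LM` in `SL_n`: its value at the
state `κ (s, t)` is `α s + β t + |Λ(ε, (s,t))|`, the extent of incomplete response being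
computed in `core (L * M)`. -/
noncomputable def annProd (L M : Transducer n) (α : L.Q → ℤ) (β : M.Q → ℤ) :
    (mulT L M).Q → ℤ := fun c =>
  α (Quotient.out c).1.1.1 + β (Quotient.out c).1.1.2 +
    (extentLen (coreT (prodT L M)) (Quotient.out c).1 : ℤ)

/-- The set `ASL_n` of annotated transducers: pairs of a transducer and an integer-valued
function on its states. -/
def ASLPair (n : ℕ) := Σ T : Transducer n, T.Q → ℤ

/-- Membership in `ASL_n`: either the transducer is in `SL_n` with no states of incomplete
response and the function is an annotation of it, or it is a degenerate `Z_a` for a letter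
`a` (whose `annotation ∞` we model by allowing an arbitrary function). -/
def ASLMem (p : ASLPair n) : Prop :=
  (SLnMem p.1 ∧ NoIncomplete p.1 ∧ Annotation p.1 p.2) ∨ ∃ a : A n, OmegaEq p.1 (Zword [a])

/-- Equality in `ASL_n`: ω-equality of the transducers matching up the annotations, with
the two elements possibly both being the degenerate `(Z_a, ∞)` for the same letter `a`. -/
def ASLEq (p q : ASLPair n) : Prop :=
  (∃ f : p.1.Q ≃ q.1.Q, (∀ s, hmap p.1 s = hmap q.1 (f s)) ∧ ∀ s, q.2 (f s) = p.2 s) ∨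
    ∃ a : A n, OmegaEq p.1 (Zword [a]) ∧ OmegaEq q.1 (Zword [a])

/-- The product on `ASL_n`: `(L, α)(M, β) = (LM, \overline{α + β})`. -/
noncomputable def ASLmul (p q : ASLPair n) : ASLPair n :=
  ⟨mulT p.1 q.1, annProd p.1 q.1 p.2 q.2⟩

/-- The identity `(1, 0)` of `ASL_n`. -/
def ASLone : ASLPair n := ⟨oneT, fun _ => 0⟩

/-- Membership in `AL_n`: annotated elements of `L_n`. -/
def ALMem (p : ASLPair n) : Prop := LnMem p.1 ∧ Annotation p.1 p.2

/-- The element `([P], α)` of `ASL_n` with `α ((q) κ) = i + |Λ(ε, q)|`, associated to the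
endomorphism `σ^i ∘ f_P`. -/
noncomputable def phiPair (P : Transducer n) (i : ℤ) : ASLPair n :=
  ⟨minRep P, fun c => i + (extentLen P (Quotient.out c).1 : ℤ)⟩

/-- The unique state at the base of a circuit labelled `Γ` (junk value if there is none). -/
noncomputable def qcirc (T : Transducer n) (Γ : Word n) : T.Q := by
  classical
  exact if h : ∃ q, dsts T Γ q = q then h.choose else Classical.choice T.ne

/-- The prime root of a word: the prime word of which `w` is a power
(junk value `w` if there is none). -/
noncomputable def primeRoot (w : Word n) : Word n := by
  classical
  exact if h : ∃ u : Word n, IsPrime u ∧ ∃ k, w = (List.replicate k u).flatten then h.choose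
  else w

/-- The action of `T ∈ M_n` on (rotation classes of) prime words: `Γ` is sent to the prime
word of which `λ(Γ, q_Γ)` is a power, where `q_Γ` is the unique state with a circuit
labelled `Γ` based at it. -/
noncomputable def PiAct (T : Transducer n) (Γ : Word n) : Word n :=
  primeRoot (outs T Γ (qcirc T Γ))

/-- The cylinder set of one-sided infinite sequences with prefix `ν`. -/
def Cyl (ν : Word n) : Set (ℕ → A n) :=
  {x | ∀ (j : ℕ) (h : j < ν.length), x j = ν.get ⟨j, h⟩}

/-- `m_q = |B(q)|`: the least cardinality of a finite set of words whose cylinders are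
contained in, and together cover, the image of `h_q`. -/
noncomputable def mq (T : Transducer n) (q : T.Q) : ℕ :=
  sInf {m : ℕ | ∃ S : Finset (Word n), S.card = m ∧
    (∀ ν ∈ S, Cyl ν ⊆ Set.range (hmap T q)) ∧
    (⋃ ν ∈ S, Cyl ν) = Set.range (hmap T q)}

/-- The signature homomorphism `sig : O_n → (ℤ/(n-1))^×`, as an element of `ℤ/(n-1)`
(for our alphabet of size `n + 2`, the modulus is `n + 1`). -/
noncomputable def sigT (T : Transducer n) : ZMod (n + 1) :=
  (mq T (Classical.choice T.ne) : ZMod (n + 1))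


/-! ### Words, streams and the maps `h_q` -/

/-- The prefix of length `k` of a one-sided infinite sequence. -/
def pre (x : ℕ → A n) (k : ℕ) : Word n := (List.range k).map x

@[simp] theorem pre_length (x : ℕ → A n) (k : ℕ) : (pre x k).length = k := by simp [pre]

@[simp] theorem pre_zero (x : ℕ → A n) : pre x 0 = [] := rfl

theorem pre_add (x : ℕ → A n) (k l : ℕ) :
    pre x (k + l) = pre x k ++ pre (fun j => x (k + j)) l := by
  simp [pre, List.range_add, Function.comp_def]

theorem pre_succ (x : ℕ → A n) (k : ℕ) :
    pre x (k + 1) = x 0 :: pre (fun j => x (j + 1)) k := by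
  simp [pre, List.range_succ_eq_map, Function.comp_def]

theorem pre_succ' (x : ℕ → A n) (k : ℕ) : pre x (k + 1) = pre x k ++ [x k] := by
  simp [pre, List.range_succ]

theorem pre_congr {x y : ℕ → A n} {k : ℕ} (h : ∀ j < k, x j = y j) : pre x k = pre y k := by
  apply List.map_congr_left
  intro j hj
  exact h j (List.mem_range.1 hj)

theorem dsts_append (T : Transducer n) (u v : Word n) (q : T.Q) :
    dsts T (u ++ v) q = dsts T v (dsts T u q) := by
  induction u generalizing q with
  | nil => rfl
  | cons a u ih => exact ih _

theorem outs_append (T : Transducer n) (u v : Word n) (q : T.Q) :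
    outs T (u ++ v) q = outs T u q ++ outs T v (dsts T u q) := by
  induction u generalizing q with
  | nil => rfl
  | cons a u ih => simp [outs, dsts, ih]

/-- An annotation only has to be checked on single letters. -/
theorem annotation_of_letter {T : Transducer n} {α : T.Q → ℤ}
    (h : ∀ a q, α (T.tr a q) = α q + ((T.out a q).length : ℤ) - 1) : Annotation T α := by
  intro q w
  induction w generalizing q with
  | nil => simp [dsts, outs]
  | cons a w ih =>
    simp only [dsts, outs, List.length_append, List.length_cons]
    rw [ih, h]
    push_cast
    ring

theorem Annotation.letter {T : Transducer n} {α : T.Q → ℤ} (hα : Annotation T α) (a : A n)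
    (q : T.Q) : α (T.tr a q) = α q + ((T.out a q).length : ℤ) - 1 := by
  simpa [dsts, outs] using hα q [a]

theorem Annotation.sl3 {T : Transducer n} {α : T.Q → ℤ} (hα : Annotation T α) : SL3 T := by
  intro q w h
  have := hα q w
  rw [h] at this
  omega

theorem Annotation.circuits {T : Transducer n} {α : T.Q → ℤ} (hα : Annotation T α) :
    CircuitsNonempty T := by
  intro q w hw h h0
  have := hα.sl3 q w h
  rw [h0] at this
  exact hw (List.length_eq_zero_iff.1 this.symm)

theorem exists_bound (T : Transducer n) (α : T.Q → ℤ) : ∃ B : ℕ, ∀ q, |α q| ≤ B := by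
  obtain ⟨b, hb⟩ := (Set.finite_range fun q => |α q|).bddAbove
  exact ⟨b.toNat, fun q => (hb ⟨q, rfl⟩).trans (Int.self_le_toNat b)⟩

theorem Annotation.exists_length {T : Transducer n} {α : T.Q → ℤ} (hα : Annotation T α) :
    ∃ C : ℕ, ∀ w q, w.length ≤ (outs T w q).length + C := by
  obtain ⟨B, hB⟩ := exists_bound T α
  refine ⟨2 * B, fun w q => ?_⟩
  have h1 := hα q w
  have h2 := abs_le.1 (hB q)
  have h3 := abs_le.1 (hB (dsts T w q))
  omega

/-- A coordinate of `h_q(x)` can be read off from any prefix of `x` whose output is long enough;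
the prefix chosen in the definition of `hmap` does not matter. -/
theorem hmap_lt (T : Transducer n) (q : T.Q) (x : ℕ → A n) (k m : ℕ)
    (h : m < (outs T (pre x k) q).length) :
    hmap T q x m = (outs T (pre x k) q).getD m default := by
  have key : ∀ k d, m < (outs T (pre x k) q).length →
      (outs T (pre x (k + d)) q).getD m default = (outs T (pre x k) q).getD m default := by
    intro k d hk
    rw [pre_add, outs_append, List.getD_append _ _ _ _ hk]
  have hex : ∃ k, m < (outs T ((List.range k).map x) q).length := ⟨k, h⟩
  have hs : m < (outs T (pre x hex.choose) q).length := hex.choose_spec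
  have h1 : hmap T q x m = (outs T (pre x hex.choose) q).getD m default := by
    unfold hmap
    rw [dif_pos hex]
    rfl
  rw [h1]
  rcases le_total k hex.choose with hle | hle
  · obtain ⟨d, hd⟩ := Nat.exists_eq_add_of_le hle
    rw [← key k d h, ← hd]
  · obtain ⟨d, hd⟩ := Nat.exists_eq_add_of_le hle
    rw [← key _ d hs, ← hd]

theorem Annotation.exists_pre {T : Transducer n} {α : T.Q → ℤ} (hα : Annotation T α) (m : ℕ) :
    ∃ k, ∀ (q : T.Q) (x : ℕ → A n), m < (outs T (pre x k) q).length := by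
  obtain ⟨C, hC⟩ := hα.exists_length
  refine ⟨m + 1 + C, fun q x => ?_⟩
  have := hC (pre x (m + 1 + C)) q
  rw [pre_length] at this
  omega

theorem hmap_add {T : Transducer n} {α : T.Q → ℤ} (hα : Annotation T α) (q : T.Q)
    (x : ℕ → A n) (k m : ℕ) :
    hmap T q x ((outs T (pre x k) q).length + m) =
      hmap T (dsts T (pre x k) q) (fun j => x (k + j)) m := by
  obtain ⟨l, hl⟩ := hα.exists_pre m
  have h1 := hl (dsts T (pre x k) q) (fun j => x (k + j))
  rw [hmap_lt T _ _ l m h1, hmap_lt T q x (k + l)]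
  · rw [pre_add, outs_append, List.getD_append_right _ _ _ _ (by omega)]
    congr 1
    omega
  · rw [pre_add, outs_append, List.length_append]
    omega

theorem hmap_head (T : Transducer n) (q : T.Q) (x : ℕ → A n) (m : ℕ)
    (h : m < (T.out (x 0) q).length) : hmap T q x m = (T.out (x 0) q).getD m default := by
  have h1 : outs T (pre x 1) q = T.out (x 0) q := by simp [pre_succ, outs]
  rw [hmap_lt T q x 1 m (by rwa [h1]), h1]

theorem hmap_tail {T : Transducer n} {α : T.Q → ℤ} (hα : Annotation T α) (q : T.Q)
    (x : ℕ → A n) (m : ℕ) :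
    hmap T q x ((T.out (x 0) q).length + m) = hmap T (T.tr (x 0) q) (fun j => x (j + 1)) m := by
  have h1 : outs T (pre x 1) q = T.out (x 0) q := by simp [pre_succ, outs]
  have h := hmap_add hα q x 1 m
  rw [h1] at h
  rw [h]
  simp [pre_succ, dsts, add_comm]

theorem pre_hmap (T : Transducer n) (q : T.Q) (x : ℕ → A n) (k : ℕ) :
    pre (hmap T q x) (outs T (pre x k) q).length = outs T (pre x k) q := by
  apply List.ext_getElem (by simp)
  intro m h1 h2
  simp only [pre, List.getElem_map, List.getElem_range]
  exact (hmap_lt T q x k m h2).trans (List.getD_eq_getElem _ _ h2)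

/-- The maps `h_q` are the only family of stream functions satisfying the recursion
`G_q (a x) = λ(a,q) · G_{π(a,q)} (x)`. -/
theorem hmap_unique {T : Transducer n} {α : T.Q → ℤ} (hα : Annotation T α)
    (G : T.Q → (ℕ → A n) → ℕ → A n)
    (h1 : ∀ q x m, m < (T.out (x 0) q).length → G q x m = (T.out (x 0) q).getD m default)
    (h2 : ∀ q x m, G q x ((T.out (x 0) q).length + m) =
      G (T.tr (x 0) q) (fun j => x (j + 1)) m) (q : T.Q) : hmap T q = G q := by
  have key : ∀ k q x m, m < (outs T (pre x k) q).length →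
      G q x m = (outs T (pre x k) q).getD m default := by
    intro k
    induction k with
    | zero => intro q x m h; simp [outs] at h
    | succ k ih =>
      intro q x m h
      rw [pre_succ] at h ⊢
      simp only [outs, List.length_append] at h ⊢
      rcases lt_or_ge m (T.out (x 0) q).length with hm | hm
      · rw [List.getD_append _ _ _ _ hm, h1 q x m hm]
      · obtain ⟨d, rfl⟩ := Nat.exists_eq_add_of_le hm
        rw [List.getD_append_right _ _ _ _ hm, h2, ih _ _ d (by omega)]
        congr 1
        omega
  funext x m
  obtain ⟨k, hk⟩ := hα.exists_pre m
  rw [hmap_lt T q x k m (hk q x), key k q x m (hk q x)]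

/-- The greatest common prefix of the outputs from `p` on inputs starting with `a` is read off
from `h_p`; hence, without incomplete response, `h_p` determines the output `λ(a,p)` and the
map of the state `π(a,p)`. -/
theorem out_eq_of_hmap_eq {T U : Transducer n} {α : T.Q → ℤ} {β : U.Q → ℤ}
    (hα : Annotation T α) (hβ : Annotation U β) (hT : NoIncomplete T) (hU : NoIncomplete U)
    {p : T.Q} {q : U.Q} (h : hmap T p = hmap U q) (a : A n) :
    T.out a p = U.out a q ∧ hmap T (T.tr a p) = hmap U (U.tr a q) := by
  -- the sequence `a x`
  let c : (ℕ → A n) → ℕ → A n := fun x j => if j = 0 then a else x (j - 1)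
  have aux : ∀ {T U : Transducer n} {α : T.Q → ℤ} (_ : Annotation T α)
      (_ : NoIncomplete T) {p : T.Q} {q : U.Q} (_ : hmap T p = hmap U q),
      (U.out a q).length ≤ (T.out a p).length := by
    intro T U α hα hT p q h
    by_contra hlt
    push Not at hlt
    obtain ⟨x, y, hxy⟩ := hT (T.tr a p)
    have e : ∀ x, hmap T (T.tr a p) x 0 = (U.out a q).getD (T.out a p).length default := by
      intro x
      have h3 := hmap_tail hα p (c x) 0
      have h4 := hmap_head U q (c x) (T.out a p).length (by simpa [c] using hlt)
      simp only [c, if_true, add_zero, Nat.add_eq_zero_iff, one_ne_zero, and_false, if_false,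
        Nat.add_sub_cancel] at h3 h4
      rw [← h3, h, h4]
    exact hxy ((e x).trans (e y).symm)
  have hl : (T.out a p).length = (U.out a q).length :=
    le_antisymm (aux hβ hU h.symm) (aux hα hT h)
  constructor
  · apply List.ext_getElem hl
    intro m h1 h2
    have h3 := hmap_head T p (c fun _ => default) m (by simpa [c] using h1)
    have h4 := hmap_head U q (c fun _ => default) m (by simpa [c] using h2)
    simp only [c, if_true] at h3 h4
    rw [List.getD_eq_getElem _ _ h1] at h3
    rw [List.getD_eq_getElem _ _ h2] at h4
    rw [← h3, ← h4, h]
  · funext x m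
    have h3 := hmap_tail hα p (c x) m
    have h4 := hmap_tail hβ q (c x) m
    simp only [c, if_true, Nat.add_eq_zero_iff, one_ne_zero, and_false, if_false,
        Nat.add_sub_cancel] at h3 h4
    rw [← h3, ← h4, h, hl]

/-! ### Bi-infinite runs -/

/-- `r` is a run of `T` on the bi-infinite sequence `x`: the state before reading `x i` is
`r i`. -/
def Run (T : Transducer n) (x : FullShift n) (r : ℤ → T.Q) : Prop :=
  ∀ i, r (i + 1) = T.tr (x i) (r i)

/-- The one-sided sequence `x i, x (i+1), …`. -/
def sufx (x : FullShift n) (i : ℤ) : ℕ → A n := fun j => x (i + j)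

theorem sufx_add (x : FullShift n) (i : ℤ) (k : ℕ) :
    (fun j => sufx x i (k + j)) = sufx x (i + k) := by
  funext j
  simp [sufx, add_assoc]

theorem Run.dsts {T : Transducer n} {x : FullShift n} {r : ℤ → T.Q} (h : Run T x r) (i : ℤ)
    (k : ℕ) : r (i + k) = dsts T (pre (sufx x i) k) (r i) := by
  induction k with
  | zero => simp [ShiftPaper.dsts]
  | succ k ih =>
    rw [pre_succ', dsts_append, ← ih, Nat.cast_succ, ← add_assoc, h]
    rfl

theorem SyncAt.mono {T : Transducer n} {k l : ℕ} (h : SyncAt T k) (hl : k ≤ l) :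
    SyncAt T l := by
  intro w hw p q
  rw [← List.take_append_drop (l - k) w, dsts_append, dsts_append]
  exact h _ (by simp; omega) _ _

/-- If `k` is a synchronizing level, the state at time `i` is the one forced by the `k` letters
before `x i`. -/
theorem exists_run {T : Transducer n} (hT : StronglySync T) (x : FullShift n) :
    ∃ r, Run T x r := by
  obtain ⟨k, hk⟩ := hT
  obtain ⟨q⟩ := T.ne
  refine ⟨fun i => dsts T (pre (sufx x (i - k)) k) q, fun i => ?_⟩
  have e1 : dsts T (pre (sufx x (i - k)) (k + 1)) q =
      T.tr (x i) (dsts T (pre (sufx x (i - k)) k) q) := by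
    rw [pre_succ', dsts_append]
    simp [dsts, sufx]
  rw [← e1, pre_succ]
  have e2 : (fun j => sufx x (i - k) (j + 1)) = sufx x (i + 1 - k) := by
    funext j
    simp only [sufx]
    congr 1
    push_cast
    ring
  rw [e2]
  exact hk _ (by simp) _ _

/-- The state of a run at time `i` only depends on the input before time `i`. -/
theorem Run.past {T : Transducer n} (hT : StronglySync T) {x y : FullShift n} {r s : ℤ → T.Q}
    (hr : Run T x r) (hs : Run T y s) {i : ℤ} (h : ∀ j < i, x j = y j) : r i = s i := by
  obtain ⟨k, hk⟩ := hT
  have h1 := hr.dsts (i - k) k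
  have h2 := hs.dsts (i - k) k
  rw [sub_add_cancel] at h1 h2
  have e : pre (sufx x (i - k)) k = pre (sufx y (i - k)) k :=
    pre_congr fun j hj => h _ (by omega)
  rw [h1, h2, e]
  exact hk _ (by simp) _ _

theorem Run.unique {T : Transducer n} (hT : StronglySync T) {x : FullShift n} {r s : ℤ → T.Q}
    (hr : Run T x r) (hs : Run T x s) : r = s :=
  funext fun _ => hr.past hT hs fun _ _ => rfl

theorem exists_run_through {T : Transducer n} (hT : StronglySync T) (hc : IsCore T) (q : T.Q) :
    ∃ x r, Run T x r ∧ r 0 = q := by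
  obtain ⟨k, w, -, hw, hq⟩ := hc q
  let x : FullShift n := fun j => w.getD (j + k).toNat default
  obtain ⟨r, hr⟩ := exists_run hT x
  refine ⟨x, r, hr, ?_⟩
  have e : pre (sufx x (-k)) k = w := by
    apply List.ext_getElem (by simp [hw])
    intro m h1 h2
    simp [pre, sufx, x, h2]
  have := hr.dsts (-k) k
  rw [neg_add_cancel, e] at this
  rw [this, hq]

/-- Two positions of a run that write to the same place of the image write the same letter. -/
theorem hmap_run_eq {T : Transducer n} {α : T.Q → ℤ} (hα : Annotation T α) {x : FullShift n}
    {r : ℤ → T.Q} (hr : Run T x r) {i i' : ℤ} {m m' : ℕ}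
    (h : i + α (r i) + m = i' + α (r i') + m') :
    hmap T (r i) (sufx x i) m = hmap T (r i') (sufx x i') m' := by
  wlog hi : i ≤ i' generalizing i i' m m'
  · exact (this h.symm (by omega)).symm
  obtain ⟨d, rfl⟩ := Int.le.dest hi
  have h1 := hmap_add hα (r i) (sufx x i) d m'
  have h2 := hα (r i) (pre (sufx x i) d)
  rw [← hr.dsts, pre_length] at h2
  rw [← hr.dsts, sufx_add] at h1
  rw [← h1]
  congr 1
  omega

/-! ### Transducers realizing maps of the full shift -/

/-- `T`, with the annotation `α`, induces the map `f` of the full shift: if `T` is in state `q`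
when it is about to read `x i`, then the output produced from then on is the part of `f x`
starting at the coordinate `i + α q`. -/
structure Realizes (T : Transducer n) (α : T.Q → ℤ) (f : FullShift n → FullShift n) : Prop where
  sync : StronglySync T
  ann : Annotation T α
  spec : ∀ x r, Run T x r → ∀ (i : ℤ) (m : ℕ), f x (i + α (r i) + m) = hmap T (r i) (sufx x i) m

/-- The last condition in `Realizes` only has to be checked on the output written while reading
one letter. -/
theorem spec_of_local {T : Transducer n} {α : T.Q → ℤ} {f : FullShift n → FullShift n}
    (hα : Annotation T α)
    (h : ∀ x r, Run T x r → ∀ (i : ℤ) (j : ℕ), j < (T.out (x i) (r i)).length →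
      f x (i + α (r i) + j) = (T.out (x i) (r i)).getD j default) :
    ∀ x r, Run T x r → ∀ (i : ℤ) (m : ℕ),
      f x (i + α (r i) + m) = hmap T (r i) (sufx x i) m := by
  intro x r hr
  have e0 : ∀ i, sufx x i 0 = x i := fun i => by simp [sufx]
  have key : ∀ (k : ℕ) (i : ℤ) (m : ℕ), m < (outs T (pre (sufx x i) k) (r i)).length →
      f x (i + α (r i) + m) = (outs T (pre (sufx x i) k) (r i)).getD m default := by
    intro k
    induction k with
    | zero => intro i m hm; simp [outs] at hm
    | succ k ih =>
      intro i m hm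
      have e1 : (fun j => sufx x i (j + 1)) = sufx x (i + 1) := by
        funext j
        simp only [sufx]
        congr 1
        push_cast
        ring
      rw [pre_succ, e1] at hm ⊢
      simp only [outs, e0, List.length_append] at hm ⊢
      have hl := hα.letter (x i) (r i)
      rw [← hr i] at hm hl ⊢
      rcases lt_or_ge m (T.out (x i) (r i)).length with hlt | hge
      · rw [List.getD_append _ _ _ _ hlt, h x r hr i m hlt]
      · obtain ⟨d, rfl⟩ := Nat.exists_eq_add_of_le hge
        rw [List.getD_append_right _ _ _ _ hge, Nat.add_sub_cancel_left,
          ← ih (i + 1) d (by omega)]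
        congr 1
        push_cast
        omega
  intro i m
  obtain ⟨k, hk⟩ := hα.exists_pre m
  rw [hmap_lt T _ _ k m (hk _ _), key k i m (hk _ _)]

/-- The coordinates of `f x` before `α (r 0)` are written by `T` before reading `x 0`. -/
theorem Realizes.past {T : Transducer n} {α : T.Q → ℤ} {f : FullShift n → FullShift n}
    (h : Realizes T α f) {x y : FullShift n} {r s : ℤ → T.Q} (hr : Run T x r) (hs : Run T y s)
    (hxy : ∀ j < 0, x j = y j) {p : ℤ} (hp : p < α (r 0)) : f x p = f y p := by
  obtain ⟨B, hB⟩ := exists_bound T α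
  -- from time `-L` on, the output lies at coordinates at most `p`
  obtain ⟨L, hL⟩ : ∃ L : ℕ, (B : ℤ) - p ≤ L := ⟨_, Int.self_le_toNat _⟩
  have hrs : r (-L) = s (-L) := hr.past h.sync hs fun j hj => hxy j (by omega)
  have hb := abs_le.1 (hB (r (-L)))
  obtain ⟨m, hm⟩ : ∃ m : ℕ, p = -L + α (r (-L)) + m :=
    ⟨(p + L - α (r (-L))).toNat, by omega⟩
  have e : pre (sufx x (-L)) L = pre (sufx y (-L)) L := pre_congr fun j hj => hxy _ (by omega)
  have hlen := h.ann (r (-L)) (pre (sufx x (-L)) L)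
  rw [← hr.dsts, pre_length, neg_add_cancel] at hlen
  have hlt : m < (outs T (pre (sufx x (-L)) L) (r (-L))).length := by omega
  have h1 := h.spec x r hr (-L) m
  have h2 := h.spec y s hs (-L) m
  rw [hmap_lt _ _ _ L m hlt] at h1
  rw [← hrs, hmap_lt _ _ _ L m (by rw [← e]; exact hlt), ← e] at h2
  rw [hm, h1, h2]

/-- The sequence with the past of `x` and the future `y`. -/
def splice (x : FullShift n) (y : ℕ → A n) : FullShift n :=
  fun j => if j < 0 then x j else y j.toNat

theorem splice_neg (x : FullShift n) (y : ℕ → A n) {j : ℤ} (hj : j < 0) :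
    splice x y j = x j := if_pos hj

theorem sufx_splice (x : FullShift n) (y : ℕ → A n) : sufx (splice x y) 0 = y := by
  funext j
  simp [sufx, splice]

theorem exists_run_splice {T : Transducer n} (hT : StronglySync T) {x : FullShift n}
    {r : ℤ → T.Q} (hr : Run T x r) (y : ℕ → A n) :
    ∃ s, Run T (splice x y) s ∧ s 0 = r 0 := by
  obtain ⟨s, hs⟩ := exists_run hT (splice x y)
  exact ⟨s, hs, hs.past hT hr fun j hj => splice_neg x y hj⟩

/-! ### Constant maps -/

theorem hmap_const_of_realizes {T : Transducer n} {α : T.Q → ℤ} {f : FullShift n → FullShift n}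
    (h : Realizes T α f) (hc : IsCore T) {c : A n} (hf : ∀ x p, f x p = c) (q : T.Q)
    (x : ℕ → A n) (m : ℕ) : hmap T q x m = c := by
  obtain ⟨z, r, hr, rfl⟩ := exists_run_through h.sync hc q
  obtain ⟨s, hs, hs0⟩ := exists_run_splice h.sync hr x
  have := h.spec _ s hs 0 m
  rw [sufx_splice, hf] at this
  rw [← hs0, ← this]

/-- In a core transducer with an annotation, one state with constant `h_q` forces all the `h_q`
to have a single value `c c c …`. The state with a loop labelled by the letter `0` has period one,
and every state can be reached from every other. -/
theorem hmap_const {T : Transducer n} {α : T.Q → ℤ} (hα : Annotation T α)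
    (hs : StronglySync T) (hc : IsCore T) {p : T.Q} (hp : ¬ FiniteExtent T p) :
    ∃ c, ∀ q x m, hmap T q x m = c := by
  have hz : ∀ x m, hmap T p x m = hmap T p (fun _ => 0) m := by
    intro x m
    by_contra hne
    exact hp ⟨m, x, _, hne⟩
  -- prepend a word to a sequence
  have hpre : ∀ (w : Word n) (x : ℕ → A n), ∃ y : ℕ → A n, pre y w.length = w ∧
      (fun j => y (w.length + j)) = x := by
    intro w x
    refine ⟨fun j => if h : j < w.length then w[j] else x (j - w.length), ?_, ?_⟩
    · apply List.ext_getElem (by simp)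
      intro m h1 h2
      simp [pre, h2]
    · funext j
      simp
  have hall : ∀ q, ∃ d, ∀ x m, hmap T q x m = hmap T p (fun _ => 0) (d + m) := by
    intro q
    obtain ⟨k, w, -, -, hq⟩ := hc q
    refine ⟨(outs T w p).length, fun x m => ?_⟩
    obtain ⟨y, h1, h2⟩ := hpre w x
    have h3 := hmap_add hα p y w.length m
    rw [h1, h2, hq p, hz] at h3
    exact h3.symm
  obtain ⟨k, hk⟩ := hs
  -- the state with a loop labelled by `0`
  obtain ⟨q, hq⟩ : ∃ q, T.tr 0 q = q := by
    refine ⟨dsts T (List.replicate k 0) p, ?_⟩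
    have h1 : dsts T (List.replicate k 0 ++ [0]) p =
        T.tr 0 (dsts T (List.replicate k 0) p) := by
      rw [dsts_append]; rfl
    rw [← h1, ← List.replicate_succ', List.replicate_succ]
    exact hk (List.replicate k 0) (by simp) (T.tr 0 p) p
  have hlen : (T.out 0 q).length = 1 := by
    have := hα.letter 0 q
    rw [hq] at this
    omega
  obtain ⟨d, hd⟩ := hall q
  have hstep : ∀ m, hmap T q (fun _ => 0) m = hmap T q (fun _ => 0) 0 := by
    intro m
    induction m with
    | zero => rfl
    | succ m ih =>
      have := hmap_tail hα q (fun _ => 0) m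
      simp only [hlen, hq] at this
      rw [add_comm m 1, this, ih]
  refine ⟨hmap T q (fun _ => 0) 0, fun s x m => ?_⟩
  obtain ⟨k', w, -, -, hw⟩ := hc s
  obtain ⟨y, h1, h2⟩ := hpre w x
  have h3 := hmap_add hα q y w.length m
  rw [h1, h2, hw q] at h3
  rw [← h3, hd, ← hd (fun _ => 0), hstep]

theorem Realizes.const {T : Transducer n} {α : T.Q → ℤ} {f : FullShift n → FullShift n}
    (h : Realizes T α f) {c : A n} (hc : ∀ q x m, hmap T q x m = c) (x : FullShift n) (p : ℤ) :
    f x p = c := by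
  obtain ⟨B, hB⟩ := exists_bound T α
  obtain ⟨r, hr⟩ := exists_run h.sync x
  have hb := abs_le.1 (hB (r (p - B)))
  have := h.spec x r hr (p - B) (B - α (r (p - B))).toNat
  rw [hc] at this
  rw [← this]
  congr 1
  omega

/-! ### Products -/

theorem dsts_prod (T U : Transducer n) (w : Word n) (s : (prodT T U).Q) :
    dsts (prodT T U) w s = (dsts T w s.1, dsts U (outs T w s.1) s.2) := by
  induction w generalizing s with
  | nil => rfl
  | cons a w ih =>
    simp only [dsts, outs, dsts_append]
    rw [ih]
    rfl

theorem annotation_prod {T U : Transducer n} {α : T.Q → ℤ} {β : U.Q → ℤ}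
    (hα : Annotation T α) (hβ : Annotation U β) :
    Annotation (prodT T U) (fun s => α s.1 + β s.2) := by
  apply annotation_of_letter
  rintro a ⟨p, q⟩
  have h1 := hα.letter a p
  have h2 := hβ q (T.out a p)
  simp only [prodT]
  omega

theorem hmap_prod {T U : Transducer n} {α : T.Q → ℤ} {β : U.Q → ℤ}
    (hα : Annotation T α) (hβ : Annotation U β) (s : (prodT T U).Q) :
    hmap (prodT T U) s = fun x => hmap U s.2 (hmap T s.1 x) := by
  have e : ∀ (x : ℕ → A n) p, pre (hmap T p x) (T.out (x 0) p).length = T.out (x 0) p := by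
    intro x p
    have := pre_hmap T p x 1
    simpa [pre_succ, outs] using this
  apply hmap_unique (annotation_prod hα hβ) (fun s x => hmap U s.2 (hmap T s.1 x))
  · rintro ⟨p, q⟩ x m h
    have h' : m < (outs U (pre (hmap T p x) (T.out (x 0) p).length) q).length := by
      rw [e]; exact h
    rw [hmap_lt U q _ _ m h', e]
    rfl
  · rintro ⟨p, q⟩ x m
    have h1 := hmap_add hβ q (hmap T p x) (T.out (x 0) p).length m
    rw [e] at h1
    simp only [hmap_tail hα] at h1
    exact h1

theorem sync_prod {T U : Transducer n} {α : T.Q → ℤ} (hα : Annotation T α)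
    (hT : StronglySync T) (hU : StronglySync U) : StronglySync (prodT T U) := by
  obtain ⟨k, hk⟩ := hT
  obtain ⟨l, hl⟩ := hU
  obtain ⟨C, hC⟩ := hα.exists_length
  -- `k` letters fix the state of `T`; the next `l + C` letters make it write `l` letters
  refine ⟨k + (l + C), fun w hw s t => ?_⟩
  obtain ⟨u, v, rfl, h1, h2⟩ : ∃ u v, w = u ++ v ∧ u.length = k ∧ v.length = l + C :=
    ⟨w.take k, w.drop k, (List.take_append_drop k w).symm, by simp; omega, by simp; omega⟩
  have h3 := hk _ h1 s.1 t.1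
  have h4 := hC v (dsts T u t.1)
  rw [dsts_prod, dsts_prod]
  simp only [dsts_append, outs_append]
  rw [h3]
  exact Prod.ext rfl ((hl.mono (by omega)) _ rfl _ _)

/-- The product `T * U` first applies the map of `T`, then the map of `U`. -/
theorem realizes_prod {T U : Transducer n} {α : T.Q → ℤ} {β : U.Q → ℤ}
    {f g : FullShift n → FullShift n} (hT : Realizes T α f) (hU : Realizes U β g) :
    Realizes (prodT T U) (fun s => α s.1 + β s.2) (fun x => g (f x)) := by
  refine ⟨sync_prod hT.ann hT.sync hU.sync, annotation_prod hT.ann hU.ann, ?_⟩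
  intro x r hr i m
  have hr1 : Run T x (fun i => (r i).1) := fun i => by
    change (r (i + 1)).1 = _
    rw [hr i]
    rfl
  obtain ⟨s, hs⟩ := exists_run hU.sync (f x)
  -- the second component of `r` is the run of `U` on `f x`, with time reparametrized by `α`
  have hkey : (r i).2 = s (i + α (r i).1) := by
    obtain ⟨l, hl⟩ := hU.sync
    obtain ⟨C, hC⟩ := hT.ann.exists_length
    have h1 := hr.dsts (i - ((l + C : ℕ) : ℤ)) (l + C)
    have h2 := hr1.dsts (i - ((l + C : ℕ) : ℤ)) (l + C)
    rw [sub_add_cancel] at h1 h2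
    set i₀ : ℤ := i - ((l + C : ℕ) : ℤ) with hi₀
    set w := pre (sufx x i₀) (l + C) with hw
    have h3 : w.length = l + C := by simp [hw]
    have h4 := hC w (r i₀).1
    have h5 := hT.ann (r i₀).1 w
    have h6 : pre (sufx (f x) (i₀ + α (r i₀).1)) (outs T w (r i₀).1).length =
        outs T w (r i₀).1 := by
      rw [← pre_hmap T (r i₀).1 (sufx x i₀) (l + C)]
      refine (congrArg _ ?_).trans (congrArg (fun y => pre y _) ?_)
      · simp
      · funext j
        exact hT.spec x _ hr1 i₀ j
    have h7 := hs.dsts (i₀ + α (r i₀).1) (outs T w (r i₀).1).length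
    rw [h6] at h7
    have h8 : i + α (r i).1 = i₀ + α (r i₀).1 + ((outs T w (r i₀).1).length : ℤ) := by
      have : (r i).1 = dsts T w (r i₀).1 := h2
      rw [this]
      omega
    rw [h8, h7, h1, dsts_prod]
    exact (hl.mono (by omega)) _ rfl _ _
  have h1 := hU.spec (f x) s hs (i + α (r i).1) m
  have h2 : sufx (f x) (i + α (r i).1) = hmap T (r i).1 (sufx x i) := by
    funext j
    exact hT.spec x _ hr1 i j
  have h3 : g (f x) (i + (α (r i).1 + β (r i).2) + m) =
      hmap U (r i).2 (hmap T (r i).1 (sufx x i)) m := by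
    rw [← h2, hkey, ← h1]
    congr 1
    ring
  rw [hmap_prod hT.ann hU.ann]
  exact h3

/-! ### Cores -/

/-- A strongly synchronizing transducer has core states, so the fallback in `CoreStateE` is never
used. -/
theorem coreStateE_iff {T : Transducer n} (hT : StronglySync T) (q : T.Q) :
    CoreStateE T q ↔ CoreState T q := by
  refine ⟨fun h => h.resolve_right fun h0 => ?_, Or.inl⟩
  obtain ⟨k, hk⟩ := hT
  have hl : (List.replicate k (0 : A n)).length = k := by simp
  exact h0 (dsts T (List.replicate k 0) q) ⟨k, _, hk, hl, fun p => hk _ hl _ _⟩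

theorem CoreState.tr {T : Transducer n} {q : T.Q} (h : CoreState T q) (a : A n) :
    CoreState T (T.tr a q) := by
  obtain ⟨k, w, hk, hw, hq⟩ := h
  refine ⟨k + 1, w ++ [a], hk.mono (by omega), by simp [hw], fun p => ?_⟩
  rw [dsts_append, hq]
  rfl

theorem core_tr {T : Transducer n} (hT : StronglySync T) (a : A n) (q : (coreT T).Q) :
    ((coreT T).tr a q).1 = T.tr a q.1 := by
  have h : CoreStateE T (T.tr a q.1) :=
    (coreStateE_iff hT _).2 (((coreStateE_iff hT _).1 q.2).tr a)
  have e : (coreT T).tr a q = ⟨T.tr a q.1, h⟩ := dif_pos h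
  rw [e]

theorem core_dsts {T : Transducer n} (hT : StronglySync T) (w : Word n) (q : (coreT T).Q) :
    (dsts (coreT T) w q).1 = dsts T w q.1 := by
  induction w generalizing q with
  | nil => rfl
  | cons a w ih =>
    simp only [dsts]
    rw [ih, core_tr hT]

theorem annotation_core {T : Transducer n} {α : T.Q → ℤ} (hT : StronglySync T)
    (hα : Annotation T α) : Annotation (coreT T) (fun q => α q.1) := by
  apply annotation_of_letter
  intro a q
  rw [core_tr hT]
  exact hα.letter a q.1

theorem hmap_core {T : Transducer n} {α : T.Q → ℤ} (hT : StronglySync T)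
    (hα : Annotation T α) (q : (coreT T).Q) : hmap (coreT T) q = hmap T q.1 := by
  apply hmap_unique (annotation_core hT hα) (fun q => hmap T q.1)
  · intro q x m h
    exact hmap_head T q.1 x m h
  · intro q x m
    rw [core_tr hT]
    exact hmap_tail hα q.1 x m

theorem sync_core {T : Transducer n} {k : ℕ} (h : SyncAt T k) : SyncAt (coreT T) k := by
  intro w hw p q
  apply Subtype.ext
  rw [core_dsts ⟨k, h⟩, core_dsts ⟨k, h⟩]
  exact h w hw _ _

theorem isCore_core {T : Transducer n} (hT : StronglySync T) : IsCore (coreT T) := by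
  intro q
  obtain ⟨k, w, hk, hw, hq⟩ := (coreStateE_iff hT _).1 q.2
  refine ⟨k, w, sync_core hk, hw, fun p => Subtype.ext ?_⟩
  rw [core_dsts hT, hq]

theorem realizes_core {T : Transducer n} {α : T.Q → ℤ} {f : FullShift n → FullShift n}
    (h : Realizes T α f) : Realizes (coreT T) (fun q => α q.1) f := by
  refine ⟨?_, annotation_core h.sync h.ann, ?_⟩
  · obtain ⟨k, hk⟩ := h.sync
    exact ⟨k, sync_core hk⟩
  · intro x r hr i m
    rw [hmap_core h.sync h.ann]
    refine h.spec x (fun i => (r i).1) (fun j => ?_) i m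
    change (r (j + 1)).1 = _
    rw [hr j, core_tr h.sync]

/-! ### Removing incomplete response -/

theorem remove_dsts (T : Transducer n) (w : Word n) (q : T.Q) :
    dsts (removeIncomplete T) w q = dsts T w q := by
  induction w generalizing q with
  | nil => rfl
  | cons a w ih => exact ih _

theorem remove_syncAt {T : Transducer n} {k : ℕ} (h : SyncAt T k) :
    SyncAt (removeIncomplete T) k := by
  intro w hw p q
  exact (remove_dsts T w p).trans ((h w hw p q).trans (remove_dsts T w q).symm)

theorem remove_isCore {T : Transducer n} (h : IsCore T) : IsCore (removeIncomplete T) := by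
  intro q
  obtain ⟨k, w, hk, hw, hq⟩ := h q
  refine ⟨k, w, remove_syncAt hk, hw, fun p => ?_⟩
  exact (remove_dsts T w p).trans (hq p)

theorem remove_out {T : Transducer n} (h : ∀ p : T.Q, FiniteExtent T p) (a : A n) (q : T.Q) :
    (removeIncomplete T).out a q =
      (T.out a q ++ extentWord T (T.tr a q)).drop (extentLen T q) := if_pos h

theorem extentLen_spec {T : Transducer n} {q : T.Q} (h : FiniteExtent T q) :
    Disagree T q (extentLen T q) := by
  classical
  have e : extentLen T q = Nat.find h := dif_pos h
  rw [e]
  exact Nat.find_spec h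

theorem extentLen_le {T : Transducer n} {q : T.Q} {j : ℕ} (h : Disagree T q j) :
    extentLen T q ≤ j := by
  classical
  have e : extentLen T q = Nat.find ⟨j, h⟩ := dif_pos ⟨j, h⟩
  rw [e]
  exact Nat.find_min' _ h

theorem agree_of_lt {T : Transducer n} {q : T.Q} {j : ℕ} (h : j < extentLen T q)
    (x y : ℕ → A n) : hmap T q x j = hmap T q y j := by
  by_contra hne
  exact absurd (extentLen_le ⟨x, y, hne⟩) (by omega)

/-- `|Λ(ε,q)| ≤ |Λ(a,q)|`: the word removed from the output does not exceed it. -/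
theorem extentLen_tr {T : Transducer n} {α : T.Q → ℤ} (hα : Annotation T α)
    (h : ∀ p : T.Q, FiniteExtent T p) (a : A n) (q : T.Q) :
    extentLen T q ≤ (T.out a q).length + extentLen T (T.tr a q) := by
  obtain ⟨x, y, hxy⟩ := extentLen_spec (h (T.tr a q))
  -- the sequence `a x`
  let c : (ℕ → A n) → ℕ → A n := fun x j => if j = 0 then a else x (j - 1)
  have e : ∀ x, hmap T q (c x) ((T.out a q).length + extentLen T (T.tr a q)) =
      hmap T (T.tr a q) x (extentLen T (T.tr a q)) := by
    intro x
    have h3 := hmap_tail hα q (c x) (extentLen T (T.tr a q))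
    simpa [c] using h3
  refine extentLen_le ⟨c x, c y, ?_⟩
  rw [e, e]
  exact hxy

theorem annotation_remove {T : Transducer n} {α : T.Q → ℤ} (hα : Annotation T α)
    (h : ∀ p : T.Q, FiniteExtent T p) :
    Annotation (removeIncomplete T) (fun q : T.Q => α q + (extentLen T q : ℤ)) := by
  apply annotation_of_letter
  rintro a (q : T.Q)
  have h1 := hα.letter a q
  have h2 := extentLen_tr hα h a q
  rw [remove_out h a q]
  change α (T.tr a q) + (extentLen T (T.tr a q) : ℤ) = α q + (extentLen T q : ℤ) + _ - 1
  have h3 : (extentWord T (T.tr a q)).length = extentLen T (T.tr a q) := by simp [extentWord]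
  rw [List.length_drop, List.length_append, h3, h1]
  push_cast [h2]
  ring

theorem hmap_remove {T : Transducer n} {α : T.Q → ℤ} (hα : Annotation T α)
    (h : ∀ p : T.Q, FiniteExtent T p) (q : T.Q) :
    hmap (removeIncomplete T) q = fun x m => hmap T q x (extentLen T q + m) := by
  apply hmap_unique (annotation_remove hα h)
    (fun (q : T.Q) x m => hmap T q x (extentLen T q + m))
  · rintro (q : T.Q) x m hm
    rw [remove_out h] at hm ⊢
    have h3 : (extentWord T (T.tr (x 0) q)).length = extentLen T (T.tr (x 0) q) := by
      simp [extentWord]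
    have hlt : extentLen T q + m < (T.out (x 0) q ++ extentWord T (T.tr (x 0) q)).length := by
      rw [List.length_drop] at hm
      omega
    rw [List.getD_eq_getElem _ _ hm, List.getElem_drop, ← List.getD_eq_getElem _ default]
    rcases lt_or_ge (extentLen T q + m) (T.out (x 0) q).length with hl | hl
    · rw [List.getD_append _ _ _ _ hl, hmap_head T q x _ hl]
    · obtain ⟨d, hd⟩ := Nat.exists_eq_add_of_le hl
      rw [List.length_append] at hlt
      have hd' : d < (extentWord T (T.tr (x 0) q)).length := by omega
      rw [List.getD_append_right _ _ _ _ hl, hd, hmap_tail hα, Nat.add_sub_cancel_left,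
        List.getD_eq_getElem _ _ hd']
      simp only [extentWord, List.getElem_map, List.getElem_range]
      exact agree_of_lt (by omega) _ _
  · rintro (q : T.Q) x m
    have h1 := extentLen_tr hα h (x 0) q
    have h3 : (extentWord T (T.tr (x 0) q)).length = extentLen T (T.tr (x 0) q) := by
      simp [extentWord]
    rw [remove_out h, List.length_drop, List.length_append, h3]
    change hmap T q x _ = hmap T (T.tr (x 0) q) _ (extentLen T (T.tr (x 0) q) + m)
    rw [← hmap_tail hα]
    congr 1
    omega

theorem noIncomplete_remove {T : Transducer n} {α : T.Q → ℤ} (hα : Annotation T α)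
    (h : ∀ p : T.Q, FiniteExtent T p) : NoIncomplete (removeIncomplete T) := by
  rintro (q : T.Q)
  obtain ⟨x, y, hxy⟩ := extentLen_spec (h q)
  refine ⟨x, y, ?_⟩
  rw [hmap_remove hα h]
  exact hxy

theorem realizes_remove {T : Transducer n} {α : T.Q → ℤ} {f : FullShift n → FullShift n}
    (hT : Realizes T α f) (h : ∀ p : T.Q, FiniteExtent T p) :
    Realizes (removeIncomplete T) (fun q : T.Q => α q + (extentLen T q : ℤ)) f := by
  refine ⟨?_, annotation_remove hT.ann h, ?_⟩
  · obtain ⟨k, hk⟩ := hT.sync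
    exact ⟨k, remove_syncAt hk⟩
  · intro x r hr i m
    have e := hT.spec x r hr i (extentLen T (r i) + m)
    refine Eq.trans ?_ (e.trans (congrFun (congrFun (hmap_remove hT.ann h (r i)) _) m).symm)
    congr 1
    push_cast
    ring

/-- In the degenerate case all outputs become the letter `c`, where `c c c …` is the only
output sequence. -/
theorem remove_out_const {T : Transducer n} {c : A n} (hc : ∀ q x m, hmap T q x m = c) (a : A n)
    (q : T.Q) : (removeIncomplete T).out a q = [c] := by
  classical
  have h : ¬ ∀ p : T.Q, FiniteExtent T p := by
    intro h
    obtain ⟨j, x, y, hxy⟩ := h q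
    exact hxy (by rw [hc, hc])
  have h1 : (removeIncomplete T).out a q = minimalRot (periodicRoot T) := if_neg h
  have hp : ∃ m, 0 < m ∧ ∀ j, hmap T (Classical.choice T.ne) (fun _ => default) (j + m) =
      hmap T (Classical.choice T.ne) (fun _ => default) j :=
    ⟨1, one_pos, fun j => by rw [hc, hc]⟩
  have h2 : periodicRoot T =
      (List.range (Nat.find hp)).map (hmap T (Classical.choice T.ne) fun _ => default) :=
    dif_pos hp
  have h3 : Nat.find hp = 1 :=
    le_antisymm (Nat.find_min' hp ⟨one_pos, fun j => by rw [hc, hc]⟩) (Nat.find_spec hp).1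
  rw [h1, h2, h3]
  simp [hc, minimalRot]

theorem annotation_zero {T : Transducer n} {c : A n} (h : ∀ a q, T.out a q = [c]) :
    Annotation T (fun _ => 0) :=
  annotation_of_letter fun a q => by simp [h]

theorem hmap_of_out_const {T : Transducer n} {c : A n} (h : ∀ a q, T.out a q = [c]) (q : T.Q) :
    hmap T q = fun _ _ => c := by
  apply hmap_unique (annotation_zero h) (fun _ _ _ => c)
  · intro q x m hm
    rw [h] at hm ⊢
    simp at hm
    simp [hm]
  · intro q x m
    rfl

/-! ### Identifying ω-equivalent states -/

/-- `T.out` does not distinguish ω-equivalent states. -/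
def OutRespects (T : Transducer n) : Prop :=
  ∀ p q : T.Q, hmap T p = hmap T q → ∀ a, T.out a p = T.out a q

/-- The class of a state in `quotT T`. -/
def cls (T : Transducer n) (q : T.Q) : (quotT T).Q := Quotient.mk (omegaSetoid T) q

theorem cls_eq_iff (T : Transducer n) (p q : T.Q) :
    cls T p = cls T q ↔ hmap T p = hmap T q := by
  refine ⟨fun h => ?_, fun h => ?_⟩
  · exact Quotient.exact (s := omegaSetoid T) h
  · exact Quotient.sound (s := omegaSetoid T) h

theorem cls_surj (T : Transducer n) (c : (quotT T).Q) : ∃ q, cls T q = c :=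
  Quotient.exists_rep c

theorem hmap_out_cls (T : Transducer n) (q : T.Q) :
    hmap T (Quotient.out (s := omegaSetoid T) (cls T q)) = hmap T q :=
  (cls_eq_iff T _ _).1 (Quotient.out_eq (s := omegaSetoid T) (cls T q))

theorem quot_out {T : Transducer n} (h : OutRespects T) (a : A n) (q : T.Q) :
    (quotT T).out a (cls T q) = T.out a q := h _ _ (hmap_out_cls T q) a

theorem quot_tr {T : Transducer n} {α : T.Q → ℤ} (hα : Annotation T α) (h : OutRespects T)
    (a : A n) (q : T.Q) : (quotT T).tr a (cls T q) = cls T (T.tr a q) := by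
  refine (cls_eq_iff T _ _).2 ?_
  have e := hmap_out_cls T q
  funext x m
  have h1 := hmap_tail hα (Quotient.out (s := omegaSetoid T) (cls T q))
    (fun j => if j = 0 then a else x (j - 1)) m
  have h2 := hmap_tail hα q (fun j => if j = 0 then a else x (j - 1)) m
  simp only [if_true, Nat.add_eq_zero_iff, one_ne_zero, and_false, if_false,
    Nat.add_sub_cancel] at h1 h2
  rw [e, h _ _ e] at h1
  exact h1.symm.trans h2

theorem quot_dsts {T : Transducer n} {α : T.Q → ℤ} (hα : Annotation T α) (h : OutRespects T)
    (w : Word n) (q : T.Q) : dsts (quotT T) w (cls T q) = cls T (dsts T w q) := by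
  induction w generalizing q with
  | nil => rfl
  | cons a w ih =>
    simp only [dsts]
    rw [quot_tr hα h, ih]

theorem outs_eq_of_hmap_eq {T : Transducer n} {α : T.Q → ℤ} (hα : Annotation T α)
    (h : OutRespects T) (w : Word n) {p q : T.Q} (hpq : hmap T p = hmap T q) :
    outs T w p = outs T w q := by
  induction w generalizing p q with
  | nil => rfl
  | cons a w ih =>
    have h1 : cls T (T.tr a p) = cls T (T.tr a q) := by
      rw [← quot_tr hα h, ← quot_tr hα h, (cls_eq_iff T p q).2 hpq]
    simp only [outs]
    rw [h _ _ hpq a, ih ((cls_eq_iff T _ _).1 h1)]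

/-- Annotations take the same value on ω-equivalent states: a long enough word leads from both
states to the same state, with the same output. -/
theorem ann_eq_of_hmap_eq {T : Transducer n} {α : T.Q → ℤ} (hα : Annotation T α)
    (hs : StronglySync T) (h : OutRespects T) {p q : T.Q} (hpq : hmap T p = hmap T q) :
    α p = α q := by
  obtain ⟨k, hk⟩ := hs
  have h1 := hα p (List.replicate k 0)
  have h2 := hα q (List.replicate k 0)
  rw [outs_eq_of_hmap_eq hα h _ hpq, hk _ (by simp) p q] at h1
  omega

theorem annotation_quot {T : Transducer n} {α : T.Q → ℤ} (hα : Annotation T α)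
    (hs : StronglySync T) (h : OutRespects T) :
    Annotation (quotT T) (fun c => α (Quotient.out (s := omegaSetoid T) c)) := by
  apply annotation_of_letter
  intro a c
  obtain ⟨q, rfl⟩ := cls_surj T c
  have e : ∀ q, α (Quotient.out (s := omegaSetoid T) (cls T q)) = α q := fun q =>
    ann_eq_of_hmap_eq hα hs h (hmap_out_cls T q)
  rw [quot_tr hα h, quot_out h, e, e]
  exact hα.letter a q

theorem hmap_quot {T : Transducer n} {α : T.Q → ℤ} (hα : Annotation T α)
    (hs : StronglySync T) (h : OutRespects T) (q : T.Q) :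
    hmap (quotT T) (cls T q) = hmap T q := by
  rw [← hmap_out_cls T q]
  apply hmap_unique (annotation_quot hα hs h)
    (fun c => hmap T (Quotient.out (s := omegaSetoid T) c))
  · intro c x m hm
    exact hmap_head T _ x m hm
  · intro c x m
    obtain ⟨q, rfl⟩ := cls_surj T c
    rw [quot_tr hα h, quot_out h]
    simp only [hmap_out_cls]
    exact hmap_tail hα q x m

theorem quot_syncAt {T : Transducer n} {α : T.Q → ℤ} (hα : Annotation T α) (h : OutRespects T)
    {k : ℕ} (hk : SyncAt T k) : SyncAt (quotT T) k := by
  intro w hw c d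
  obtain ⟨p, rfl⟩ := cls_surj T c
  obtain ⟨q, rfl⟩ := cls_surj T d
  rw [quot_dsts hα h, quot_dsts hα h, hk w hw p q]

theorem quot_isCore {T : Transducer n} {α : T.Q → ℤ} (hα : Annotation T α) (h : OutRespects T)
    (hc : IsCore T) : IsCore (quotT T) := by
  intro c
  obtain ⟨q, rfl⟩ := cls_surj T c
  obtain ⟨k, w, hk, hw, hq⟩ := hc q
  refine ⟨k, w, quot_syncAt hα h hk, hw, fun d => ?_⟩
  obtain ⟨p, rfl⟩ := cls_surj T d
  rw [quot_dsts hα h, hq]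

theorem weaklyMinimal_quot {T : Transducer n} {α : T.Q → ℤ} (hα : Annotation T α)
    (hs : StronglySync T) (h : OutRespects T) : WeaklyMinimal (quotT T) := by
  intro c d hcd
  obtain ⟨p, rfl⟩ := cls_surj T c
  obtain ⟨q, rfl⟩ := cls_surj T d
  rw [hmap_quot hα hs h, hmap_quot hα hs h] at hcd
  exact (cls_eq_iff T p q).2 hcd

theorem realizes_quot {T : Transducer n} {α : T.Q → ℤ} {f : FullShift n → FullShift n}
    (hT : Realizes T α f) (h : OutRespects T) :
    Realizes (quotT T) (fun c => α (Quotient.out (s := omegaSetoid T) c)) f := by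
  have hs : StronglySync (quotT T) := by
    obtain ⟨k, hk⟩ := hT.sync
    exact ⟨k, quot_syncAt hT.ann h hk⟩
  refine ⟨hs, annotation_quot hT.ann hT.sync h, ?_⟩
  intro x r hr i m
  -- the run of the quotient is the image of the run of `T`
  obtain ⟨s, hrun⟩ := exists_run hT.sync x
  have hrun' : Run (quotT T) x (fun i => cls T (s i)) := fun j => by
    change cls T (s (j + 1)) = (quotT T).tr (x j) (cls T (s j))
    rw [hrun j, quot_tr hT.ann h]
  rw [hr.unique hs hrun', hmap_quot hT.ann hT.sync h,
    ann_eq_of_hmap_eq hT.ann hT.sync h (hmap_out_cls T (s i))]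
  exact hT.spec x s hrun i m

/-! ### Minimal representatives -/

theorem isPrime_singleton (c : A n) : IsPrime [c] := by
  refine ⟨by simp, fun u k h => ?_⟩
  have : u ≠ [] := by
    rintro rfl
    simp at h
  simpa [Nat.one_le_iff_ne_zero] using this

/-- The minimal representative of a core transducer realizing `f` lies in `SL_n` and realizes `f`;
in the degenerate case of a constant map it is the one-state transducer `Z_c` of a letter `c`. -/
theorem minRep_spec {T : Transducer n} {α : T.Q → ℤ} {f : FullShift n → FullShift n}
    (hT : Realizes T α f) (hc : IsCore T) :
    SLnMem (minRep T) ∧ ∃ β, Realizes (minRep T) β f := by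
  have hcR : IsCore (removeIncomplete T) := remove_isCore hc
  by_cases h : ∀ p : T.Q, FiniteExtent T p
  · have hR := realizes_remove hT h
    have hC := realizes_core hR
    have hni : NoIncomplete (coreT (removeIncomplete T)) := by
      intro q
      obtain ⟨x, y, hxy⟩ := noIncomplete_remove hT.ann h q.1
      refine ⟨x, y, ?_⟩
      rw [hmap_core hR.sync hR.ann]
      exact hxy
    have hor : OutRespects (coreT (removeIncomplete T)) := fun p q hpq a =>
      (out_eq_of_hmap_eq hC.ann hC.ann hni hni hpq a).1
    have hW := realizes_quot hC hor
    refine ⟨⟨⟨hW.ann.circuits, hW.sync, quot_isCore hC.ann hor (isCore_core hR.sync),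
      Or.inl ⟨?_, weaklyMinimal_quot hC.ann hC.sync hor⟩⟩, hW.ann.sl3⟩, _, hW⟩
    intro c
    obtain ⟨q, rfl⟩ := cls_surj _ c
    obtain ⟨x, y, hxy⟩ := hni q
    refine ⟨x, y, fun he => hxy ?_⟩
    rw [← hmap_quot hC.ann hC.sync hor]
    exact he
  · push Not at h
    obtain ⟨p, hp⟩ := h
    obtain ⟨c, hcc⟩ := hmap_const hT.ann hT.sync hc hp
    have hout := remove_out_const hcc
    have hR : Realizes (removeIncomplete T) (fun _ => 0) f := by
      refine ⟨?_, annotation_zero hout, ?_⟩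
      · obtain ⟨k, hk⟩ := hT.sync
        exact ⟨k, remove_syncAt hk⟩
      · intro x r _ i m
        rw [hmap_of_out_const hout, hT.const hcc]
    have hC := realizes_core hR
    have houtC : ∀ a q, (coreT (removeIncomplete T)).out a q = [c] := fun a q => hout a q.1
    have hor : OutRespects (coreT (removeIncomplete T)) := fun p q _ a => by
      rw [houtC, houtC]
    have hW := realizes_quot hC hor
    refine ⟨⟨⟨hW.ann.circuits, hW.sync, quot_isCore hC.ann hor (isCore_core hR.sync),
      Or.inr ⟨[c], isPrime_singleton c, by simp [minimalRot], ?_⟩⟩, hW.ann.sl3⟩, _, hW⟩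
    have hmapW : ∀ s, hmap (minRep T) s = fun _ _ => c := by
      intro s
      obtain ⟨q, rfl⟩ := cls_surj (coreT (removeIncomplete T)) s
      exact (hmap_quot hC.ann hC.sync hor q).trans (hmap_of_out_const houtC q)
    refine ⟨⟨fun _ => PUnit.unit, fun _ => Classical.choice (minRep T).ne, fun s => ?_,
      fun _ => rfl⟩, fun s => ?_⟩
    · exact weaklyMinimal_quot hC.ann hC.sync hor _ _ ((hmapW _).trans (hmapW s).symm)
    · rw [hmapW, hmap_of_out_const (T := Zword [c]) (fun _ _ => rfl)]

/-! ### Uniqueness of the minimal transducer realizing a map up to a shift -/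

/-- If `f = σ^d ∘ g` and `U` has no incomplete response, then `U` never lags behind `T`: the
coordinates of `f x` before `α (r 0)` are determined by the past of `x`, while the coordinate
`β (s 0)` of `g x` is not. -/
theorem ann_le_of_shift {T U : Transducer n} {α : T.Q → ℤ} {β : U.Q → ℤ}
    {f g : FullShift n → FullShift n} (hT : Realizes T α f) (hU : Realizes U β g)
    (hni : NoIncomplete U) {d : ℤ} (hfg : ∀ x, f x = shiftZ d (g x)) {x : FullShift n}
    {r : ℤ → T.Q} {s : ℤ → U.Q} (hr : Run T x r) (hs : Run U x s) :
    α (r 0) ≤ β (s 0) + d := by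
  by_contra hlt
  push Not at hlt
  -- two futures of `x` on which the first letter written by `U` after time `0` differs;
  -- `T` has already written that letter before time `0`
  obtain ⟨y, y', hy⟩ := hni (s 0)
  apply hy
  have hpast : f (splice x y) (β (s 0) + d) = f (splice x y') (β (s 0) + d) := by
    obtain ⟨t, ht, ht0⟩ := exists_run_splice hT.sync hr y
    obtain ⟨t', ht', -⟩ := exists_run_splice hT.sync hr y'
    refine hT.past ht ht' (fun j hj => ?_) (by rw [ht0]; exact hlt)
    rw [splice_neg x y hj, splice_neg x y' hj]
  have e : ∀ y, hmap U (s 0) y 0 = f (splice x y) (β (s 0) + d) := by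
    intro y
    obtain ⟨t, ht, ht0⟩ := exists_run_splice hU.sync hs y
    have h1 := hU.spec _ t ht 0 0
    rw [sufx_splice, ht0] at h1
    rw [← h1, hfg]
    simp [shiftZ]
  rw [e, e, hpast]

/-- Apply `ann_le_of_shift` in both directions: the two transducers are always about to write the
same coordinate, so the states reached after the same past induce the same map. -/
theorem exists_hmap_eq {T U : Transducer n} {α : T.Q → ℤ} {β : U.Q → ℤ}
    {f g : FullShift n → FullShift n} (hT : Realizes T α f) (hU : Realizes U β g)
    (hc : IsCore T) (hniT : NoIncomplete T) (hniU : NoIncomplete U) {d : ℤ}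
    (hfg : ∀ x, f x = shiftZ d (g x)) (q : T.Q) : ∃ s, hmap T q = hmap U s := by
  obtain ⟨x, r, hr, rfl⟩ := exists_run_through hT.sync hc q
  obtain ⟨s, hs⟩ := exists_run hU.sync x
  have hgf : ∀ x, g x = shiftZ (-d) (f x) := fun x => by
    rw [hfg]
    funext p
    simp [shiftZ]
  have h1 := ann_le_of_shift hT hU hniU hfg hr hs
  have h2 := ann_le_of_shift hU hT hniT hgf hs hr
  refine ⟨s 0, ?_⟩
  funext y m
  obtain ⟨t, ht, ht0⟩ := exists_run_splice hT.sync hr y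
  obtain ⟨u, hu, hu0⟩ := exists_run_splice hU.sync hs y
  have e1 := hT.spec _ t ht 0 m
  have e2 := hU.spec _ u hu 0 m
  rw [sufx_splice, ht0] at e1
  rw [sufx_splice, hu0] at e2
  rw [← e1, ← e2, hfg]
  simp only [shiftZ]
  congr 1
  omega

theorem hmap_const_zword {T : Transducer n} {α : T.Q → ℤ} (hα : Annotation T α)
    (hs : StronglySync T) (hc : IsCore T) {w : Word n} (h : OmegaEq T (Zword w)) :
    ∃ c, ∀ q x m, hmap T q x m = c := by
  obtain ⟨e, he⟩ := h
  obtain ⟨q⟩ := T.ne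
  refine hmap_const hα hs hc (p := q) ?_
  rintro ⟨j, x, y, hxy⟩
  apply hxy
  have hz : ∀ k (x y : ℕ → A n) s, outs (Zword w) (pre x k) s = outs (Zword w) (pre y k) s := by
    intro k
    induction k with
    | zero => intros; rfl
    | succ k ih =>
      intro x y s
      rw [pre_succ, pre_succ]
      simp only [outs]
      exact congrArg _ (ih _ _ _)
  rw [he q]
  by_cases hex : ∃ k, j < (outs (Zword w) (pre x k) (e q)).length
  · obtain ⟨k, hk⟩ := hex
    rw [hmap_lt _ _ x k j hk, hmap_lt _ _ y k j (by rwa [hz k y x]), hz k x y]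
  · have hx : hmap (Zword w) (e q) x j = default := by
      unfold hmap
      exact dif_neg hex
    have hy : hmap (Zword w) (e q) y j = default := by
      unfold hmap
      refine dif_neg ?_
      rintro ⟨k, hk⟩
      exact hex ⟨k, by rw [hz k x y]; exact hk⟩
    rw [hx, hy]

theorem not_const_of_noIncomplete {T : Transducer n} (h : NoIncomplete T) {c : A n}
    (hc : ∀ q x m, hmap T q x m = c) : False := by
  obtain ⟨q⟩ := T.ne
  obtain ⟨x, y, hxy⟩ := h q
  exact hxy (by rw [hc, hc])

theorem shift_of_omegaEq {T U : Transducer n} {α : T.Q → ℤ} {β : U.Q → ℤ}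
    {f g : FullShift n → FullShift n} (hT : Realizes T α f) (hU : Realizes U β g)
    (hmT : MnMem T) (h : OmegaEq T U) : ∃ d : ℤ, ∀ x, f x = shiftZ d (g x) := by
  obtain ⟨e, he⟩ := h
  obtain ⟨-, -, hc, ⟨hni, hwm⟩ | ⟨w, -, -, hw⟩⟩ := hmT
  · have hniU : NoIncomplete U := by
      intro s
      obtain ⟨x, y, hxy⟩ := hni (e.symm s)
      rw [he, e.apply_symm_apply] at hxy
      exact ⟨x, y, hxy⟩
    have hout : ∀ a q, T.out a q = U.out a (e q) := fun a q =>
      (out_eq_of_hmap_eq hT.ann hU.ann hni hniU (he q) a).1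
    have htr : ∀ a q, e (T.tr a q) = U.tr a (e q) := by
      intro a q
      have h1 : T.tr a q = e.symm (U.tr a (e q)) := hwm _ _ (by
        rw [he (e.symm _), e.apply_symm_apply]
        exact (out_eq_of_hmap_eq hT.ann hU.ann hni hniU (he q) a).2)
      rw [h1, e.apply_symm_apply]
    have houts : ∀ w q, outs T w q = outs U w (e q) := by
      intro w
      induction w with
      | nil => intro q; rfl
      | cons a w ih =>
        intro q
        simp only [outs]
        rw [hout, ih, htr]
    have hdsts : ∀ w q, e (dsts T w q) = dsts U w (e q) := by
      intro w
      induction w with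
      | nil => intro q; rfl
      | cons a w ih =>
        intro q
        simp only [dsts]
        rw [ih, htr]
    -- two annotations of a strongly connected transducer differ by a constant
    obtain ⟨p⟩ := T.ne
    have hann : ∀ q, α q = β (e q) + (α p - β (e p)) := by
      intro q
      obtain ⟨k, w, -, -, hq⟩ := hc q
      have h1 := hT.ann p w
      have h2 := hU.ann (e p) w
      rw [← houts, ← hdsts, hq] at h2
      rw [hq] at h1
      omega
    refine ⟨α p - β (e p), fun x => ?_⟩
    obtain ⟨r, hr⟩ := exists_run hT.sync x
    have hs : Run U x (fun i => e (r i)) := fun i => by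
      change e (r (i + 1)) = U.tr (x i) (e (r i))
      rw [hr i, htr]
    obtain ⟨B, hB⟩ := exists_bound T α
    funext j
    have hb := abs_le.1 (hB (r (j - B)))
    have h1 := hT.spec x r hr (j - B) (B - α (r (j - B))).toNat
    have h2 := hU.spec x _ hs (j - B) (B - α (r (j - B))).toNat
    rw [← he, ← h1] at h2
    have h3 := hann (r (j - B))
    have e1 : j - B + α (r (j - B)) + ((B - α (r (j - B))).toNat : ℤ) = j := by omega
    have e2 : j - B + β (e (r (j - B))) + ((B - α (r (j - B))).toNat : ℤ) =
        j - (α p - β (e p)) := by omega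
    rw [e1, e2] at h2
    exact h2.symm
  · obtain ⟨c, hcc⟩ := hmap_const_zword hT.ann hT.sync hc hw
    have hcU : ∀ s x m, hmap U s x m = c := fun s x m => by
      rw [← e.apply_symm_apply s, ← he, hcc]
    refine ⟨0, fun x => ?_⟩
    funext j
    simp [shiftZ, hT.const hcc, hU.const hcU]

theorem omegaEq_of_shift {T U : Transducer n} {α : T.Q → ℤ} {β : U.Q → ℤ}
    {f g : FullShift n → FullShift n} (hT : Realizes T α f) (hU : Realizes U β g)
    (hmT : MnMem T) (hmU : MnMem U) {d : ℤ} (hfg : ∀ x, f x = shiftZ d (g x)) :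
    OmegaEq T U := by
  have hgf : ∀ x, g x = shiftZ (-d) (f x) := fun x => by
    rw [hfg]
    funext p
    simp [shiftZ]
  obtain ⟨-, -, hcT, hT'⟩ := hmT
  obtain ⟨-, -, hcU, hU'⟩ := hmU
  have hconst : ∀ c, (∀ q x m, hmap T q x m = c) ↔ ∀ q x m, hmap U q x m = c := by
    refine fun c => ⟨fun h => hmap_const_of_realizes hU hcU fun x p => ?_,
      fun h => hmap_const_of_realizes hT hcT fun x p => ?_⟩
    · rw [hgf]; exact hT.const h _ _
    · rw [hfg]; exact hU.const h _ _
  rcases hT' with ⟨hniT, hwmT⟩ | ⟨w, -, -, hw⟩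
  · rcases hU' with ⟨hniU, hwmU⟩ | ⟨w, -, -, hw⟩
    · choose e he using exists_hmap_eq hT hU hcT hniT hniU hfg
      refine ⟨Equiv.ofBijective e ⟨fun p q hpq => hwmT _ _ ?_, fun s => ?_⟩, he⟩
      · rw [he, he, hpq]
      · obtain ⟨q, hq⟩ := exists_hmap_eq hU hT hcU hniU hniT hgf s
        exact ⟨q, hwmU _ _ ((he q).symm.trans hq.symm)⟩
    · obtain ⟨c, hc⟩ := hmap_const_zword hU.ann hU.sync hcU hw
      exact (not_const_of_noIncomplete hniT ((hconst c).2 hc)).elim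
  · obtain ⟨c, hc⟩ := hmap_const_zword hT.ann hT.sync hcT hw
    have hcc := (hconst c).1 hc
    rcases hU' with ⟨hniU, -⟩ | ⟨w', -, -, hw'⟩
    · exact (not_const_of_noIncomplete hniU hcc).elim
    · obtain ⟨e, -⟩ := hw
      obtain ⟨e', -⟩ := hw'
      refine ⟨e.trans e'.symm, fun q => ?_⟩
      funext x m
      rw [hc, hcc]

/-! ### Every endomorphism of the shift is realized -/

theorem EndShift.comm (f : EndShift n) (i : ℤ) (x : FullShift n) :
    f.1 (shiftZ i x) = shiftZ i (f.1 x) := by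
  have hadd : ∀ (i j : ℤ) (x : FullShift n), shiftZ (i + j) x = shiftZ i (shiftZ j x) := by
    intro i j x
    funext p
    simp only [shiftZ]
    congr 1
    ring
  have h0 : ∀ y : FullShift n, shiftZ 0 y = y := fun y => by
    funext p
    simp [shiftZ]
  induction i using Int.induction_on with
  | zero => rw [h0, h0]
  | succ i ih => rw [add_comm (i : ℤ) 1, hadd, f.2.2, ih, ← hadd]
  | pred i ih =>
    have hinj : ∀ y z : FullShift n, shiftZ 1 y = shiftZ 1 z → y = z := by
      intro y z h
      funext p
      have := congrFun h (p + 1)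
      simpa [shiftZ] using this
    apply hinj
    rw [← f.2.2, ← hadd, ← hadd, show (1 : ℤ) + (-(i : ℤ) - 1) = -i by ring, ih]

/-- Curtis–Hedlund–Lyndon: by compactness, the coordinate `0` of `f x` depends only on the
coordinates of `x` in some interval `[-N, N]`. -/
theorem exists_window {f : FullShift n → FullShift n} (hf : Continuous f) :
    ∃ N : ℕ, ∀ x y : FullShift n, (∀ j : ℤ, |j| ≤ N → x j = y j) → f x 0 = f y 0 := by
  have hloc : ∀ x : FullShift n, ∃ N : ℕ, ∀ y : FullShift n,
      (∀ j : ℤ, |j| ≤ N → y j = x j) → f y 0 = f x 0 := by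
    intro x
    have hopen : IsOpen {y : FullShift n | f y 0 = f x 0} :=
      (isOpen_discrete {f x 0}).preimage ((continuous_apply 0).comp hf)
    obtain ⟨I, u, hu, hI⟩ := isOpen_pi_iff.1 hopen x rfl
    refine ⟨I.sup Int.natAbs, fun y hy => hI fun j hj => ?_⟩
    rw [hy j ?_]
    · exact (hu j hj).2
    · have : j.natAbs ≤ I.sup Int.natAbs := Finset.le_sup (f := Int.natAbs) hj
      rw [Int.abs_eq_natAbs]
      exact_mod_cast this
  choose N hN using hloc
  let V : FullShift n → Set (FullShift n) := fun x => {y | ∀ j : ℤ, |j| ≤ N x → y j = x j}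
  have hV : ∀ x, V x ∈ nhds x := by
    intro x
    have hfin : {j : ℤ | |j| ≤ N x}.Finite :=
      (Set.finite_Icc (-(N x : ℤ)) (N x)).subset fun j hj => abs_le.1 hj
    refine (Filter.eventually_all_finite hfin).2 fun j _ => ?_
    exact (continuous_apply j).continuousAt.eventually_mem
      ((isOpen_discrete {x j}).mem_nhds rfl)
  obtain ⟨t, ht⟩ := CompactSpace.elim_nhds_subcover V hV
  refine ⟨t.sup N, fun x y hxy => ?_⟩
  have hx : x ∈ ⋃ z ∈ t, V z := by rw [ht]; trivial
  obtain ⟨z, hz, hxz⟩ := Set.mem_iUnion₂.1 hx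
  have hle : N z ≤ t.sup N := Finset.le_sup hz
  rw [hN z x hxz, hN z y fun j hj => ?_]
  rw [← hxy j (hj.trans (by exact_mod_cast hle))]
  exact hxz j hj

/-- The synchronous transducer of a block code: the states are the words of length `K`, recording
the last `K` letters read, and the rule `F` is applied to words of length `K + 1`. -/
def blockT (K : ℕ) (F : Word n → A n) : Transducer n where
  Q := List.Vector (A n) K
  fin := inferInstance
  ne := ⟨List.Vector.replicate K 0⟩
  tr := fun a u => ⟨(u.1 ++ [a]).drop 1, by simp [u.2]⟩
  out := fun a u => [F (u.1 ++ [a])]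

theorem block_dsts (K : ℕ) (F : Word n → A n) (w : Word n) (u : (blockT K F).Q) :
    (dsts (blockT K F) w u).1 = (u.1 ++ w).drop w.length := by
  induction w generalizing u with
  | nil => simp [dsts]
  | cons a w ih =>
    simp only [dsts]
    rw [ih]
    change ((u.1 ++ [a]).drop 1 ++ w).drop w.length = _
    rw [← List.drop_append_of_le_length (by simp), List.drop_drop, List.append_assoc,
      add_comm]
    rfl

theorem block_dsts_full (K : ℕ) (F : Word n → A n) {w : Word n} (hw : w.length = K)
    (u : (blockT K F).Q) : dsts (blockT K F) w u = ⟨w, hw⟩ := by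
  apply Subtype.ext
  rw [block_dsts]
  have : u.1.length = w.length := u.2.trans hw.symm
  rw [← this, List.drop_left]

theorem block_sync (K : ℕ) (F : Word n → A n) : SyncAt (blockT K F) K := fun w hw p q => by
  rw [block_dsts_full K F hw, block_dsts_full K F hw]

/-- The block code transducer reads `N` letters beyond the coordinate it writes, whence the
constant annotation `-N`. -/
theorem exists_realizes (f : EndShift n) :
    ∃ (T : Transducer n) (α : T.Q → ℤ), IsCore T ∧ Realizes T α f.1 := by
  obtain ⟨N, hN⟩ := exists_window f.2.1
  let F : Word n → A n := fun u => f.1 (fun j => u.getD (j + N).toNat default) 0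
  let P := blockT (2 * N) F
  have hann : Annotation P (fun _ => -(N : ℤ)) := annotation_of_letter fun a q => by
    simp [P, blockT]
  have hcore : IsCore P := fun q =>
    ⟨2 * N, q.1, block_sync _ _, q.2, fun p => block_dsts_full _ _ q.2 p⟩
  refine ⟨P, fun _ => -(N : ℤ), hcore, ⟨_, block_sync _ _⟩, hann, spec_of_local hann ?_⟩
  intro x r hr i j hj
  have hj0 : j = 0 := Nat.lt_one_iff.1 hj
  subst hj0
  have hri := hr.dsts (i - (2 * N : ℕ)) (2 * N)
  rw [sub_add_cancel, block_dsts_full (2 * N) F (pre_length _ _)] at hri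
  have hout : (P.out (x i) (r i)).getD 0 default =
      F (pre (sufx x (i - (2 * N : ℕ))) (2 * N + 1)) := by
    rw [hri, pre_succ']
    change F (_ ++ [x i]) = _
    simp [sufx]
  rw [hout]
  -- translate the window around `i - N` to the origin
  have hsh := congrFun (f.comm (-(i - N)) x) 0
  simp only [shiftZ, zero_sub, neg_neg] at hsh
  have hpos : i + -(N : ℤ) + ((0 : ℕ) : ℤ) = i - N := by
    push_cast
    ring
  rw [hpos, ← hsh]
  apply hN
  intro j hj
  have hj' := abs_le.1 hj
  have hlt : (j + N).toNat < (pre (sufx x (i - (2 * N : ℕ))) (2 * N + 1)).length := by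
    rw [pre_length]
    omega
  rw [List.getD_eq_getElem _ _ hlt]
  simp only [pre, List.getElem_map, List.getElem_range, sufx]
  rw [Int.toNat_of_nonneg (by omega)]
  change x (j - -(i - N)) = _
  congr 1
  push_cast
  ring

/-! ### Every transducer in `SL_n` realizes an endomorphism -/

/-- The Lipschitz condition yields an annotation: measure the difference between output and
input length along a path from a base state; two paths have a common return path. -/
theorem exists_annotation {T : Transducer n} (hc : IsCore T) (h : SL3 T) :
    ∃ α : T.Q → ℤ, Annotation T α := by
  obtain ⟨p⟩ := T.ne
  have hpath : ∀ q, ∃ w : Word n, ∀ s, dsts T w s = q := fun q => by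
    obtain ⟨k, w, -, -, hw⟩ := hc q
    exact ⟨w, hw⟩
  choose w hw using hpath
  refine ⟨fun q => (outs T (w q) p).length - (w q).length, annotation_of_letter ?_⟩
  intro a q
  have h1 := h p (w (T.tr a q) ++ w p) (by rw [dsts_append, hw p])
  have h2 := h p (w q ++ a :: w p) (by rw [dsts_append]; exact hw p _)
  simp only [outs_append, outs, List.length_append, List.length_cons, hw] at h1 h2
  change (_ : ℤ) - _ = _
  omega

theorem continuous_of_window {G : FullShift n → A n} (N : ℕ)
    (h : ∀ x y : FullShift n, (∀ j : ℤ, |j| ≤ N → x j = y j) → G x = G y) : Continuous G := by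
  rw [continuous_iff_continuousAt]
  intro x
  have hfin : {j : ℤ | |j| ≤ N}.Finite :=
    (Set.finite_Icc (-(N : ℤ)) N).subset fun j hj => abs_le.1 hj
  have hev : ∀ᶠ y : FullShift n in nhds x, ∀ j ∈ {j : ℤ | |j| ≤ N}, y j = x j := by
    refine (Filter.eventually_all_finite hfin).2 fun j _ => ?_
    exact (continuous_apply j).continuousAt.eventually_mem
      ((isOpen_discrete {x j}).mem_nhds rfl)
  refine (continuousAt_const (y := G x)).congr ?_
  filter_upwards [hev] with y hy
  exact h x y fun j hj => (hy j hj).symm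

/-- An annotated strongly synchronizing transducer induces an endomorphism: glue the outputs along
the runs at the places given by the annotation. -/
theorem exists_end {T : Transducer n} {α : T.Q → ℤ} (hα : Annotation T α)
    (hs : StronglySync T) : ∃ f : EndShift n, Realizes T α f.1 := by
  choose R hR using exists_run hs
  obtain ⟨B, hB⟩ := exists_bound T α
  -- the coordinate `m` is written at or after the time `m - B`
  let f : FullShift n → FullShift n := fun x m =>
    hmap T (R x (m - B)) (sufx x (m - B)) (B - α (R x (m - B))).toNat
  have hspec : ∀ x r, Run T x r → ∀ (i : ℤ) (m : ℕ),
      f x (i + α (r i) + m) = hmap T (r i) (sufx x i) m := by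
    intro x r hr i m
    rw [(hR x).unique hs hr |>.symm]
    refine hmap_run_eq hα (hR x) ?_
    have := abs_le.1 (hB (R x (i + α (R x i) + m - B)))
    omega
  have hcont : Continuous f := by
    refine continuous_pi fun m => ?_
    obtain ⟨k, hk⟩ := hs
    obtain ⟨C, hC⟩ := hα.exists_length
    -- it depends on `k` letters before that time and `2 * B + C + 1` letters after it
    refine continuous_of_window (m.natAbs + k + 4 * B + C + 1) fun x y hxy => ?_
    have hst : R x (m - B) = R y (m - B) := by
      have h1 := (hR x).dsts (m - B - k) k
      have h2 := (hR y).dsts (m - B - k) k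
      rw [sub_add_cancel] at h1 h2
      have e : pre (sufx x (m - B - k)) k = pre (sufx y (m - B - k)) k :=
        pre_congr fun j hj => hxy _ (by rw [abs_le]; omega)
      rw [h1, h2, e]
      exact hk _ (by simp) _ _
    have e : pre (sufx x (m - B)) (2 * B + C + 1) = pre (sufx y (m - B)) (2 * B + C + 1) :=
      pre_congr fun j hj => hxy _ (by rw [abs_le]; omega)
    have hb := abs_le.1 (hB (R x (m - B)))
    have hlen := hC (pre (sufx x (m - B)) (2 * B + C + 1)) (R x (m - B))
    rw [pre_length] at hlen
    have hlt : (B - α (R x (m - B))).toNat <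
        (outs T (pre (sufx x (m - B)) (2 * B + C + 1)) (R x (m - B))).length := by omega
    change hmap T _ _ _ = hmap T _ _ _
    rw [← hst, hmap_lt _ _ _ _ _ hlt, hmap_lt _ _ (sufx y (m - B)) (2 * B + C + 1) _
      (by rw [← e]; exact hlt), e]
  refine ⟨⟨f, hcont, fun x => ?_⟩, hs, hα, hspec⟩
  have hrun : Run T (shiftZ 1 x) (fun i => R x (i - 1)) := fun i => by
    change R x (i + 1 - 1) = T.tr (x (i - 1)) (R x (i - 1))
    rw [← hR x (i - 1)]
    congr 1
    ring
  funext m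
  have h1 := (hR (shiftZ 1 x)).unique hs hrun
  have h2 : sufx (shiftZ 1 x) (m - B) = sufx x (m - 1 - B) := by
    funext j
    simp only [sufx, shiftZ]
    congr 1
    ring
  change hmap T _ _ _ = hmap T _ _ _
  rw [h1, h2]
  simp only [sub_right_comm m (B : ℤ) 1]

/-! ### The identity transducer and the isomorphism -/

theorem oneT_spec (n : ℕ) :
    SLnMem (oneT : Transducer n) ∧ ∃ α, Realizes (oneT : Transducer n) α (fun x => x) := by
  have hann : Annotation (oneT : Transducer n) (fun _ => 0) :=
    annotation_of_letter fun a q => by simp [oneT]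
  have hsync : SyncAt (oneT : Transducer n) 0 := fun _ _ _ _ => rfl
  have hmap1 : ∀ q : (oneT : Transducer n).Q, hmap oneT q = fun x => x := by
    intro q
    apply hmap_unique hann (fun _ x => x)
    · intro q x m hm
      have hm0 : m = 0 := Nat.lt_one_iff.1 hm
      subst hm0
      rfl
    · intro q x m
      exact congrArg x (add_comm 1 m)
  refine ⟨⟨⟨hann.circuits, ⟨0, hsync⟩, fun q => ⟨0, [], hsync, rfl, fun p => rfl⟩,
    Or.inl ⟨fun q => ⟨fun _ => 0, fun _ => 1, ?_⟩, fun _ _ _ => rfl⟩⟩, hann.sl3⟩, _,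
    ⟨0, hsync⟩, hann, ?_⟩
  · rw [hmap1]
    exact zero_ne_one
  · intro x r _ i m
    rw [hmap1]
    simp [sufx]

/-- The quotient of the monoid `End(X_n^ℤ, σ_n)` by the congruence
`⟨σ_n⟩` generated by the pairs `(σ_n^i, id)` (which relates `ψ` and `φ` exactly when
`ψ = σ_n^i ∘ φ` for some `i : ℤ`) is isomorphic to the transducer monoid `SL_n`:
there is a map `φ` from `End(X_n^ℤ, σ_n)` into `SL_n` (equality in `SL_n` being
ω-equality) sending the identity to the identity, multiplicative with respect to
composition, surjective, and identifying `f` and `g` exactly when `f = σ_n^i ∘ g`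
for some `i : ℤ`. -/
theorem end_mod_shift_iso_SLn (n : ℕ) :
    ∃ φ : EndShift n → Transducer n,
      (∀ f : EndShift n, SLnMem (φ f)) ∧
      (∀ e : EndShift n, (∀ x, e.1 x = x) → OmegaEq (φ e) oneT) ∧
      (∀ f g h : EndShift n, (∀ x, h.1 x = g.1 (f.1 x)) →
        OmegaEq (φ h) (mulT (φ f) (φ g))) ∧
      (∀ T : Transducer n, SLnMem T → ∃ f : EndShift n, OmegaEq (φ f) T) ∧
      (∀ f g : EndShift n,
        (OmegaEq (φ f) (φ g) ↔ ∃ i : ℤ, ∀ x, f.1 x = shiftZ i (g.1 x))) := by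
  have hex : ∀ f : EndShift n, ∃ T : Transducer n, SLnMem T ∧ ∃ α, Realizes T α f.1 := by
    intro f
    obtain ⟨P, α, hP, hr⟩ := exists_realizes f
    exact ⟨minRep P, minRep_spec hr hP⟩
  choose φ hφ α hα using hex
  have hid : ∀ y : FullShift n, y = shiftZ 0 y := fun y => by
    funext p
    simp [shiftZ]
  refine ⟨φ, hφ, fun e he => ?_, fun f g h hfg => ?_, fun T hT => ?_, fun f g => ⟨fun h => ?_, ?_⟩⟩
  · obtain ⟨h1, β, h2⟩ := oneT_spec n
    refine omegaEq_of_shift (hα e) h2 (hφ e).1 h1.1 (d := 0) fun x => ?_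
    rw [he]
    exact hid x
  · have h1 := realizes_prod (hα f) (hα g)
    obtain ⟨h2, β, h3⟩ := minRep_spec (realizes_core h1) (isCore_core h1.sync)
    refine omegaEq_of_shift (hα h) h3 (hφ h).1 h2.1 (d := 0) fun x => ?_
    rw [hfg]
    exact hid _
  · obtain ⟨β, hβ⟩ := exists_annotation hT.1.2.2.1 hT.2
    obtain ⟨f, hf⟩ := exists_end hβ hT.1.2.1
    exact ⟨f, omegaEq_of_shift (hα f) hf (hφ f).1 hT.1 (d := 0) fun x => hid _⟩
  · exact shift_of_omegaEq (hα f) (hα g) (hφ f).1 h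
  · rintro ⟨i, hi⟩
    exact omegaEq_of_shift (hα f) (hα g) (hφ f).1 (hφ g).1 hi

end ShiftPaper
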